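/- The following reduction formula holds: F_C^{(3)}(1, 1/2; 1, 1, 1; 1/9, 1/9, 1/9) = (√6/(32π³)) Γ(1/24) Γ(5/24) Γ(7/24) Γ(11/24), i.e. ∑_{k₁≥0} ∑_{k₂≥0} ∑_{k₃≥0} (1)_{k₁+k₂+k₃} (1/2)_{k₁+k₂+k₃} / ((k₁)!² (k₂)!² (k₃)!² · 9^{k₁+k₂+k₃}) = (√6/(32π³)) Γ(1/24) Γ(5/24) Γ(7/24) Γ(11/24). -/

import Mathlib

open Real Finset

/-!
Grouping the terms of the Lauricella sum by degree turns it into `K(1/36)`, where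
`K(x) = ∑ C(2n,n) aₙ xⁿ` and `aₙ = ∑ₖ C(n,k)² C(2k,k)`; this is Watson's integral for the simple
cubic lattice. The third-order differential equation of `K` is the symmetric square of the
second-order equation of `f(w) = ∑ aₙ wⁿ`: for `x = w (1 - 10 w + 9 w²) / (1 - 9 w²)²` one has
`K(x) = (1 - 9 w²) f(w)²`, since both sides solve the same Fuchsian system and agree at `w = 0`. At
`w = 1 - 2√2/3` the argument `x` reaches the radius of convergence `1/36` of `K`, and the identity
extends to this point by monotone convergence.

Averaging the Legendre generating function writes `f(w)` as the integral of an inverse square root,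
a complete elliptic integral in `t = tan ψ`. At this value of `w` an explicit algebraic
substitution, defined over the curve `X² = v³ - v`, takes it to
`∫ (1 + c/X) dv / √((v - 2/√3) X)` over `v > 2/√3`. Both summands are beta integrals, because
`v = (x + x⁻¹)/√3` makes the cubic a binomial in `x⁶`; their ratio and their product follow from
Gauss's multiplication formula and the reflection formula.
-/

section Choose

theorem cast_choose_mul_succ (n k : ℕ) :
    (n.choose k : ℝ) * (n + 1) = ((n + 1).choose k : ℝ) * (n + 1 - k) := by
  rcases le_or_gt k (n + 1) with h | h
  · have := Nat.choose_mul_succ_eq n k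
    rw [← Nat.cast_add_one, ← Nat.cast_sub h]
    exact_mod_cast this
  · simp [Nat.choose_eq_zero_of_lt h, Nat.choose_eq_zero_of_lt (Nat.lt_of_succ_lt h)]

theorem cast_choose_succ_mul (n k : ℕ) :
    (n.choose (k + 1) : ℝ) * (k + 1) = (n.choose k : ℝ) * (n - k) := by
  rcases le_or_gt k n with h | h
  · rw [← Nat.cast_sub h]
    exact_mod_cast Nat.choose_succ_right_eq n k
  · simp [Nat.choose_eq_zero_of_lt h, Nat.choose_eq_zero_of_lt (Nat.lt_succ_of_lt h)]

theorem cast_succ_mul_centralBinom_succ (k : ℕ) :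
    ((k : ℝ) + 1) * (k + 1).centralBinom = 2 * (2 * k + 1) * k.centralBinom := by
  exact_mod_cast Nat.succ_mul_centralBinom_succ k

theorem cast_centralBinom_le_four_pow (k : ℕ) : (k.centralBinom : ℝ) ≤ 4 ^ k := by
  have := Nat.choose_le_two_pow (2 * k) k
  rw [pow_mul] at this
  exact_mod_cast this

theorem ascPochhammer_eval_half (n : ℕ) :
    (ascPochhammer ℝ n).eval (1 / 2) = n.factorial * n.centralBinom / 4 ^ n := by
  induction n with
  | zero => simp
  | succ n ih =>
    rw [ascPochhammer_succ_eval, ih, Nat.factorial_succ, pow_succ]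
    push_cast
    field_simp
    linear_combination (-2 : ℝ) * cast_succ_mul_centralBinom_succ n

end Choose

section Multinomial

open Finset.Nat (antidiagonalTuple mem_antidiagonalTuple)

/-- The sum of the squared multinomial coefficients of degree `n` in `d` variables, i.e. the number
of abelian squares of length `2n` over `d` letters; the symmetric multiple sum of the theorem is
graded by it. -/
def multinomialSqSum (d n : ℕ) : ℕ :=
  ∑ k ∈ antidiagonalTuple d n, Nat.multinomial univ k ^ 2

theorem multinomial_univ_cons {d : ℕ} (i : ℕ) (k : Fin d → ℕ) :
    Nat.multinomial univ (Fin.cons i k : Fin (d + 1) → ℕ) =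
      (i + ∑ j, k j).choose (∑ j, k j) * Nat.multinomial univ k := by
  have h := Nat.multinomial_spec univ (Fin.cons i k : Fin (d + 1) → ℕ)
  rw [Fin.prod_univ_succ, Fin.sum_univ_succ] at h
  simp only [Fin.cons_zero, Fin.cons_succ] at h
  refine Nat.eq_of_mul_eq_mul_left
    (Nat.mul_pos i.factorial_pos (prod_pos fun j (_ : j ∈ univ) => (k j).factorial_pos)) ?_
  rw [h, ← Nat.add_choose_mul_factorial_mul_factorial, ← Nat.multinomial_spec univ k]
  ring

theorem multinomialSqSum_succ (d n : ℕ) :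
    multinomialSqSum (d + 1) n =
      ∑ m ∈ range (n + 1), n.choose m ^ 2 * multinomialSqSum d m := by
  simp only [multinomialSqSum, mul_sum]
  rw [sum_sigma']
  refine sum_bij' (fun k _ => ⟨∑ j, Fin.tail k j, Fin.tail k⟩)
    (fun p _ => Fin.cons (n - p.1) p.2) ?_ ?_ ?_ ?_ ?_
  · intro k hk
    rw [mem_antidiagonalTuple, Fin.sum_univ_succ] at hk
    simp only [mem_sigma, mem_range, mem_antidiagonalTuple, Fin.tail, and_true]
    omega
  · rintro ⟨m, k⟩ hp
    simp only [mem_sigma, mem_range, mem_antidiagonalTuple] at hp ⊢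
    rw [Fin.sum_cons]
    omega
  · intro k hk
    rw [mem_antidiagonalTuple, Fin.sum_univ_succ] at hk
    conv_rhs => rw [← Fin.cons_self_tail k]
    congr 1
    simp only [Fin.tail]
    omega
  · rintro ⟨m, k⟩ hp
    simp only [mem_sigma, mem_antidiagonalTuple] at hp
    simp [hp.2]
  · intro k hk
    rw [mem_antidiagonalTuple, Fin.sum_univ_succ] at hk
    conv_lhs => rw [← Fin.cons_self_tail k, multinomial_univ_cons]
    rw [mul_pow, ← hk]
    rfl

theorem multinomialSqSum_one (n : ℕ) : multinomialSqSum 1 n = 1 := by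
  simp [multinomialSqSum, antidiagonalTuple]

theorem multinomialSqSum_two (n : ℕ) : multinomialSqSum 2 n = n.centralBinom := by
  simp [multinomialSqSum_succ 1, multinomialSqSum_one, Nat.sum_range_choose_sq,
    Nat.centralBinom_eq_two_mul_choose]

theorem hasSum_of_hasSum_antidiagonalTuple {d : ℕ} {f : (Fin d → ℕ) → ℝ} {s : ℝ}
    (hf : ∀ k, 0 ≤ f k) (h : HasSum (fun n => ∑ k ∈ antidiagonalTuple d n, f k) s) :
    HasSum f s := by
  have hfiber (n : ℕ) : HasSum (fun k : antidiagonalTuple d n => f k)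
      (∑ k ∈ antidiagonalTuple d n, f k) := Finset.hasSum _ f
  have hsummable : Summable fun p : Σ n, antidiagonalTuple d n => f p.2 :=
    (summable_sigma_of_nonneg fun p => hf _).2
      ⟨fun n => (hfiber n).summable, by simpa only [(hfiber _).tsum_eq] using h.summable⟩
  have hsigma := hsummable.hasSum
  rw [(hsigma.sigma hfiber).unique h] at hsigma
  exact (Finset.Nat.sigmaAntidiagonalTupleEquivTuple d).hasSum_iff.1 hsigma

theorem hasSum_multinomial_sq {d : ℕ} {φ : ℕ → ℝ} {s : ℝ} (hφ : ∀ n, 0 ≤ φ n)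
    (h : HasSum (fun n => φ n * multinomialSqSum d n) s) :
    HasSum (fun k : Fin d → ℕ => φ (∑ j, k j) * (Nat.multinomial univ k : ℝ) ^ 2) s := by
  refine hasSum_of_hasSum_antidiagonalTuple (fun k => mul_nonneg (hφ _) (sq_nonneg _))
    (h.congr_fun fun n => ?_)
  rw [multinomialSqSum, Nat.cast_sum, mul_sum]
  refine sum_congr rfl fun k hk => ?_
  rw [mem_antidiagonalTuple.1 hk, Nat.cast_pow]

end Multinomial

theorem lauricellaFC_summand_eq {d : ℕ} (y : ℝ) (k : Fin d → ℕ) :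
    (ascPochhammer ℝ (∑ j, k j)).eval 1 * (ascPochhammer ℝ (∑ j, k j)).eval (1 / 2) /
        ((∏ j, ((k j).factorial : ℝ) ^ 2) * y ^ (∑ j, k j)) =
      (∑ j, k j).centralBinom * (1 / (4 * y)) ^ (∑ j, k j) *
        (Nat.multinomial univ k : ℝ) ^ 2 := by
  have hspec : (∏ j, ((k j).factorial : ℝ)) * Nat.multinomial univ k = (∑ j, k j).factorial := by
    exact_mod_cast Nat.multinomial_spec univ k
  have hpos : ∏ j, ((k j).factorial : ℝ) ≠ 0 := prod_ne_zero_iff.2 fun j _ => by positivity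
  rw [ascPochhammer_eval_one, ascPochhammer_eval_half, prod_pow, ← hspec, one_div, inv_pow, mul_pow]
  field_simp

section ChooseSqSum

/-- The transform `∑ₖ C(n,k)² bₖ` of a sequence `b`. It sends `C(2k,k)` to `honeycomb`, and `xᵏ` to
`(1 - x)ⁿ Pₙ((1 + x) / (1 - x))` with `Pₙ` the Legendre polynomial. -/
noncomputable def chooseSqSum (b : ℕ → ℝ) (n : ℕ) : ℝ :=
  ∑ k ∈ range (n + 1), (n.choose k : ℝ) ^ 2 * b k

variable {b : ℕ → ℝ}

theorem chooseSqSum_eq_sum_range (b : ℕ → ℝ) {n m : ℕ} (h : n + 1 ≤ m) :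
    chooseSqSum b n = ∑ k ∈ range m, (n.choose k : ℝ) ^ 2 * b k := by
  refine sum_subset (range_mono h) fun k _ hk => ?_
  rw [Nat.choose_eq_zero_of_lt (by simpa using hk)]
  simp

theorem chooseSqSum_zero (b : ℕ → ℝ) : chooseSqSum b 0 = b 0 := by simp [chooseSqSum]

theorem chooseSqSum_one (b : ℕ → ℝ) : chooseSqSum b 1 = b 0 + b 1 := by
  simp [chooseSqSum, sum_range_succ]

theorem chooseSqSum_nonneg (hb : ∀ k, 0 ≤ b k) (n : ℕ) : 0 ≤ chooseSqSum b n :=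
  sum_nonneg fun k _ => mul_nonneg (sq_nonneg _) (hb k)

theorem chooseSqSum_le {r : ℝ} (hr : 0 ≤ r) (hb : ∀ k, b k ≤ (r ^ 2) ^ k) (n : ℕ) :
    chooseSqSum b n ≤ ((1 + r) ^ 2) ^ n :=
  calc chooseSqSum b n ≤ ∑ k ∈ range (n + 1), (r ^ k * n.choose k) ^ 2 := by
        refine sum_le_sum fun k _ => ?_
        rw [mul_pow, mul_comm, pow_right_comm]
        gcongr
        exact hb k
    _ ≤ (∑ k ∈ range (n + 1), r ^ k * n.choose k) ^ 2 :=
        sum_sq_le_sq_sum_of_nonneg fun _ _ => by positivity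
    _ = ((1 + r) ^ 2) ^ n := by
        rw [add_comm 1 r, pow_right_comm, add_pow]
        simp

theorem choose_sq_recurrence (n k : ℕ) :
    ((n : ℝ) + 2) * ((n + 2).choose (k + 2) : ℝ) ^ 2 =
      (2 * n + 3) * (((n + 1).choose (k + 2) : ℝ) ^ 2 + ((n + 1).choose (k + 1) : ℝ) ^ 2) -
        (n + 1) * ((n.choose (k + 2) : ℝ) ^ 2 - 2 * (n.choose (k + 1) : ℝ) ^ 2 +
          (n.choose k : ℝ) ^ 2) := by
  have h₁ : (n.choose (k + 1) : ℝ) = n.choose k * (n - k) / (k + 1) :=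
    eq_div_of_mul_eq (by positivity) (cast_choose_succ_mul n k)
  have h₂ : (n.choose (k + 2) : ℝ) = n.choose (k + 1) * (n - (k + 1)) / (k + 1 + 1) :=
    eq_div_of_mul_eq (by positivity) (by exact_mod_cast cast_choose_succ_mul n (k + 1))
  simp only [Nat.choose_succ_succ', Nat.cast_add]
  rw [h₂, h₁]
  field_simp
  ring

theorem chooseSqSum_recurrence (b : ℕ → ℝ) (n : ℕ) :
    ((n : ℝ) + 2) * chooseSqSum b (n + 2) =
      (2 * n + 3) * (chooseSqSum b (n + 1) + chooseSqSum (fun k => b (k + 1)) (n + 1)) -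
        (n + 1) * (chooseSqSum b n - 2 * chooseSqSum (fun k => b (k + 1)) n +
          chooseSqSum (fun k => b (k + 2)) n) := by
  have h := sum_congr rfl fun k (_ : k ∈ range (n + 1)) =>
    congrArg (· * b (k + 2)) (choose_sq_recurrence n k)
  simp only [sub_mul, add_mul, mul_assoc, sum_sub_distrib, sum_add_distrib, ← mul_sum] at h
  have hsplit₁ (g : ℕ → ℝ) : ∑ k ∈ range (n + 2), g k = ∑ k ∈ range (n + 1), g (k + 1) + g 0 :=
    sum_range_succ' g _
  have hsplit₂ (g : ℕ → ℝ) : ∑ k ∈ range (n + 3), g k =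
      ∑ k ∈ range (n + 1), g (k + 2) + g 1 + g 0 := by
    rw [sum_range_succ', hsplit₁]
  rw [chooseSqSum_eq_sum_range b (le_refl (n + 3)),
    chooseSqSum_eq_sum_range b (by lia : n + 1 + 1 ≤ n + 3),
    chooseSqSum_eq_sum_range b (by lia : n + 1 ≤ n + 3),
    chooseSqSum_eq_sum_range _ (le_refl (n + 2)),
    chooseSqSum_eq_sum_range _ (by lia : n + 1 ≤ n + 2), chooseSqSum]
  simp only [hsplit₁, hsplit₂, Nat.choose_zero_right, Nat.choose_one_right]
  push_cast
  linear_combination h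

theorem chooseSqSum_pow_recurrence (x : ℝ) (n : ℕ) :
    ((n : ℝ) + 2) * chooseSqSum (x ^ ·) (n + 2) =
      (2 * n + 3) * (1 + x) * chooseSqSum (x ^ ·) (n + 1) -
        (n + 1) * (1 - x) ^ 2 * chooseSqSum (x ^ ·) n := by
  have hshift (i m : ℕ) : chooseSqSum (fun k => x ^ (k + i)) m =
      x ^ i * chooseSqSum (x ^ ·) m := by
    simp only [chooseSqSum, mul_sum, pow_add]
    exact sum_congr rfl fun k _ => by ring
  rw [chooseSqSum_recurrence, hshift, hshift, hshift]
  ring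

end ChooseSqSum

section Honeycomb

/-- The number `∑ₖ C(n,k)² C(2k,k)` of closed walks of length `2n` on the honeycomb lattice. -/
noncomputable def honeycomb : ℕ → ℝ := chooseSqSum fun k => k.centralBinom

theorem honeycomb_zero : honeycomb 0 = 1 := by simp [honeycomb, chooseSqSum_zero]

theorem honeycomb_one : honeycomb 1 = 3 := by
  norm_num [honeycomb, chooseSqSum_one, Nat.centralBinom_eq_two_mul_choose]

theorem honeycomb_nonneg (n : ℕ) : 0 ≤ honeycomb n :=
  chooseSqSum_nonneg (fun _ => Nat.cast_nonneg _) n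

theorem honeycomb_le_nine_pow (n : ℕ) : honeycomb n ≤ 9 ^ n := by
  have h := chooseSqSum_le zero_le_two
    (fun k => (cast_centralBinom_le_four_pow k).trans_eq (by norm_num)) n
  norm_num at h
  exact h

theorem multinomialSqSum_three (n : ℕ) : (multinomialSqSum 3 n : ℝ) = honeycomb n := by
  simp [multinomialSqSum_succ 2, multinomialSqSum_two, honeycomb, chooseSqSum]

/-- Zeilberger's certificate `k³(3k - 4n) / n²`, times the summand of `honeycomb n`. -/
noncomputable def honeycombCertificate (n k : ℕ) : ℝ :=
  (k : ℝ) ^ 3 * (3 * k - 4 * n) / n ^ 2 * ((n.choose k : ℝ) ^ 2 * k.centralBinom)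

theorem honeycomb_telescoping (n k : ℕ) :
    ((n : ℝ) + 2) ^ 2 * (((n + 2).choose k : ℝ) ^ 2 * k.centralBinom) -
        (10 * ((n : ℝ) + 1) ^ 2 + 10 * (n + 1) + 3) *
          (((n + 1).choose k : ℝ) ^ 2 * k.centralBinom) +
        9 * ((n : ℝ) + 1) ^ 2 * ((n.choose k : ℝ) ^ 2 * k.centralBinom) =
      honeycombCertificate (n + 2) (k + 1) - honeycombCertificate (n + 2) k := by
  have hk : (k : ℝ) + 1 ≠ 0 := by positivity
  have hn₁ : (n : ℝ) + 1 ≠ 0 := by positivity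
  have hn₂ : (n : ℝ) + 1 + 1 ≠ 0 := by positivity
  have h₀ := cast_choose_mul_succ n k
  have h₁ := cast_choose_mul_succ (n + 1) k
  have h₂ := cast_choose_succ_mul (n + 2) k
  have h₃ := cast_succ_mul_centralBinom_succ k
  push_cast at h₁ h₂
  rw [← eq_div_iff hn₁] at h₀
  rw [← eq_div_iff hn₂] at h₁
  rw [← eq_div_iff hk] at h₂
  rw [mul_comm, ← eq_div_iff hk] at h₃
  simp only [honeycombCertificate]
  push_cast
  rw [h₀, h₁, h₂, h₃]
  field_simp
  ring

theorem honeycomb_recurrence (n : ℕ) :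
    ((n : ℝ) + 2) ^ 2 * honeycomb (n + 2) =
      (10 * ((n : ℝ) + 1) ^ 2 + 10 * (n + 1) + 3) * honeycomb (n + 1) -
        9 * ((n : ℝ) + 1) ^ 2 * honeycomb n := by
  have h := sum_congr rfl fun k (_ : k ∈ range (n + 3)) => honeycomb_telescoping n k
  rw [sum_range_sub, sum_add_distrib, sum_sub_distrib, ← mul_sum, ← mul_sum, ← mul_sum,
    ← chooseSqSum_eq_sum_range _ (by lia : n + 2 + 1 ≤ n + 3),
    ← chooseSqSum_eq_sum_range _ (by lia : n + 1 + 1 ≤ n + 3),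
    ← chooseSqSum_eq_sum_range _ (by lia : n + 1 ≤ n + 3)] at h
  have hbot : honeycombCertificate (n + 2) 0 = 0 := by simp [honeycombCertificate]
  have htop : honeycombCertificate (n + 2) (n + 3) = 0 := by simp [honeycombCertificate]
  rw [hbot, htop] at h
  rw [honeycomb]
  linear_combination h

end Honeycomb

section SimpleCubic

/-- The number `C(2n,n) ∑ₖ C(n,k)² C(2k,k)` of closed walks of length `2n` on the simple cubic
lattice, the coefficient of `xⁿ` in the Lauricella function at `(4x, 4x, 4x)`. -/
noncomputable def simpleCubic (n : ℕ) : ℝ := n.centralBinom * honeycomb n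

theorem simpleCubic_nonneg (n : ℕ) : 0 ≤ simpleCubic n :=
  mul_nonneg (Nat.cast_nonneg _) (honeycomb_nonneg n)

theorem simpleCubic_le_pow (n : ℕ) : simpleCubic n ≤ 36 ^ n := by
  rw [show (36 : ℝ) = 4 * 9 by norm_num, mul_pow]
  exact mul_le_mul (cast_centralBinom_le_four_pow n) (honeycomb_le_nine_pow n)
    (honeycomb_nonneg n) (by positivity)

theorem simpleCubic_zero : simpleCubic 0 = 1 := by simp [simpleCubic, honeycomb_zero]

theorem simpleCubic_one : simpleCubic 1 = 6 := by
  norm_num [simpleCubic, honeycomb_one, Nat.centralBinom_eq_two_mul_choose]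

theorem simpleCubic_recurrence (n : ℕ) :
    ((n : ℝ) + 2) ^ 3 * simpleCubic (n + 2) =
      2 * (2 * n + 3) * (10 * ((n : ℝ) + 1) ^ 2 + 10 * (n + 1) + 3) * simpleCubic (n + 1) -
        36 * (n + 1) * (2 * n + 1) * (2 * n + 3) * simpleCubic n := by
  have h := honeycomb_recurrence n
  have h₁ := cast_succ_mul_centralBinom_succ n
  have h₂ := cast_succ_mul_centralBinom_succ (n + 1)
  push_cast at h₂
  simp only [simpleCubic]
  linear_combination ((n : ℝ) + 2) * (n + 2).centralBinom * h +
    ((10 * ((n : ℝ) + 1) ^ 2 + 10 * (n + 1) + 3) * honeycomb (n + 1) -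
        9 * ((n : ℝ) + 1) ^ 2 * honeycomb n) * h₂ -
    18 * (n + 1) * (2 * n + 3) * honeycomb n * h₁

end SimpleCubic

section PowerSeries

open Filter Topology

/-- The sum of the real power series with coefficients `c`; by convention of `tsum` it is `0` where
the series diverges. -/
noncomputable def powSum (c : ℕ → ℝ) (w : ℝ) : ℝ := ∑' n, c n * w ^ n

/-- The Cauchy estimates for `c` on the open disc of radius `R`, i.e. `∑ cₙ wⁿ` has radius of
convergence at least `R`. -/
def CauchyBounded (R : ℝ) (c : ℕ → ℝ) : Prop :=
  ∀ r, 0 ≤ r → r < R → ∃ C, ∀ n, |c n| * r ^ n ≤ C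

/-- The coefficients of the Euler operator `θ = w d/dw` applied to `∑ cₙ wⁿ`. -/
def eulerCoeff (c : ℕ → ℝ) (n : ℕ) : ℝ := n * c n

variable {c : ℕ → ℝ} {R w : ℝ}

theorem powSum_zero (c : ℕ → ℝ) : powSum c 0 = c 0 := by
  rw [powSum, tsum_eq_single 0 fun n hn => by simp [hn], pow_zero, mul_one]

theorem powSum_nonneg (hc : ∀ n, 0 ≤ c n) (hw : 0 ≤ w) : 0 ≤ powSum c w :=
  tsum_nonneg fun n => mul_nonneg (hc n) (pow_nonneg hw n)

theorem cauchyBounded_of_le_pow {A : ℝ} (hA : 0 < A) (hc : ∀ n, 0 ≤ c n)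
    (h : ∀ n, c n ≤ A ^ n) : CauchyBounded A⁻¹ c := fun r hr₀ hr => ⟨1, fun n => by
  have hAr : A * r ≤ 1 := by
    have := mul_le_mul_of_nonneg_left hr.le hA.le
    rwa [mul_inv_cancel₀ hA.ne'] at this
  calc |c n| * r ^ n ≤ A ^ n * r ^ n := by
        rw [abs_of_nonneg (hc n)]
        gcongr
        exact h n
    _ = (A * r) ^ n := (mul_pow ..).symm
    _ ≤ 1 := pow_le_one₀ (by positivity) hAr⟩

theorem CauchyBounded.euler (h : CauchyBounded R c) : CauchyBounded R (eulerCoeff c) := by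
  intro r hr₀ hr
  obtain ⟨s, hrs, hsR⟩ := exists_between hr
  have hs : 0 < s := hr₀.trans_lt hrs
  obtain ⟨C, hC⟩ := h s hs.le hsR
  have hq : |r / s| < 1 := by
    rwa [abs_of_nonneg (by positivity), div_lt_one hs]
  obtain ⟨B, hB⟩ := (tendsto_self_mul_const_pow_of_abs_lt_one hq).bddAbove_range
  refine ⟨B * C, fun n => ?_⟩
  have hBn : (n : ℝ) * (r / s) ^ n ≤ B := hB ⟨n, rfl⟩
  calc |eulerCoeff c n| * r ^ n = (n * (r / s) ^ n) * (|c n| * s ^ n) := by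
        rw [eulerCoeff, abs_mul, Nat.abs_cast, div_pow]
        field_simp
    _ ≤ B * C := mul_le_mul hBn (hC n) (by positivity) (le_trans (by positivity) hBn)

theorem CauchyBounded.summable_abs (h : CauchyBounded R c) {r : ℝ} (hr₀ : 0 ≤ r) (hr : r < R) :
    Summable fun n => |c n| * r ^ n := by
  obtain ⟨s, hrs, hsR⟩ := exists_between hr
  have hs : 0 < s := hr₀.trans_lt hrs
  obtain ⟨C, hC⟩ := h s hs.le hsR
  refine Summable.of_nonneg_of_le (fun n => by positivity) (fun n => ?_)
    ((summable_geometric_of_lt_one (by positivity) ((div_lt_one hs).2 hrs)).mul_left C)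
  calc |c n| * r ^ n = (|c n| * s ^ n) * (r / s) ^ n := by
        rw [div_pow]
        field_simp
    _ ≤ C * (r / s) ^ n := by
        gcongr
        exact hC n

theorem CauchyBounded.hasSum (h : CauchyBounded R c) (hw : |w| < R) :
    HasSum (fun n => c n * w ^ n) (powSum c w) := by
  refine (Summable.of_norm ?_).hasSum
  simpa only [norm_mul, norm_pow, Real.norm_eq_abs] using h.summable_abs (abs_nonneg w) hw

theorem CauchyBounded.analyticAt (h : CauchyBounded R c) (hw : |w| < R) :
    AnalyticAt ℝ (powSum c) w := by
  have hsum : powSum c = (FormalMultilinearSeries.ofScalars ℝ c).sum := by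
    ext w
    rw [← FormalMultilinearSeries.ofScalarsSum, FormalMultilinearSeries.ofScalarsSum_eq_tsum]
    simp [powSum]
  obtain ⟨s, hws, hsR⟩ := exists_between hw
  have hs : 0 < s := (abs_nonneg w).trans_lt hws
  obtain ⟨C, hC⟩ := h s hs.le hsR
  lift s to NNReal using hs.le
  have hrad : (s : ENNReal) ≤ (FormalMultilinearSeries.ofScalars ℝ c).radius := by
    refine FormalMultilinearSeries.le_radius_of_bound _ C fun n => ?_
    rw [FormalMultilinearSeries.ofScalars_norm]
    exact hC n
  have hpos : (0 : ENNReal) < s := by exact_mod_cast hs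
  rw [hsum]
  refine (FormalMultilinearSeries.hasFPowerSeriesOnBall _
    (hpos.trans_le hrad)).analyticAt_of_mem (Metric.eball_subset_eball hrad ?_)
  rw [Metric.mem_eball, edist_dist, Real.dist_eq, sub_zero,
    ENNReal.ofReal_lt_iff_lt_toReal (abs_nonneg _) ENNReal.coe_ne_top]
  exact hws

theorem CauchyBounded.continuousAt (h : CauchyBounded R c) (hw : |w| < R) :
    ContinuousAt (powSum c) w := (h.analyticAt hw).continuousAt

theorem CauchyBounded.hasDerivAt (h : CauchyBounded R c) (hw₀ : w ≠ 0) (hw : |w| < R) :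
    HasDerivAt (powSum c) (powSum (eulerCoeff c) w / w) w := by
  obtain ⟨s, hws, hsR⟩ := exists_between hw
  have hs : 0 < s := (abs_nonneg w).trans_lt hws
  have hmem : w ∈ Metric.ball 0 s := by simpa using hws
  have hbound (n : ℕ) (y : ℝ) (hy : y ∈ Metric.ball 0 s) :
      ‖c n * (n * y ^ (n - 1))‖ ≤ |eulerCoeff c n| * s ^ n * s⁻¹ := by
    rcases n with _ | n
    · simp [eulerCoeff]
    have hys : |y| ^ n ≤ s ^ n := by
      gcongr
      exact (by simpa using hy : |y| < s).le
    calc ‖c (n + 1) * ((n + 1 : ℕ) * y ^ n)‖ = |eulerCoeff c (n + 1)| * |y| ^ n := by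
          rw [eulerCoeff, ← mul_assoc, norm_mul, norm_pow, mul_comm (c _)]
          rfl
      _ ≤ |eulerCoeff c (n + 1)| * s ^ n := by gcongr
      _ = |eulerCoeff c (n + 1)| * s ^ (n + 1) * s⁻¹ := by
          rw [pow_succ]
          field_simp
  refine (hasDerivAt_tsum_of_isPreconnected ((h.euler.summable_abs hs.le hsR).mul_right s⁻¹)
    Metric.isOpen_ball (convex_ball _ _).isPreconnected
    (fun n y _ => (hasDerivAt_pow n y).const_mul (c n)) hbound hmem (h.hasSum hw).summable
    hmem).congr_deriv ?_
  rw [powSum, ← tsum_div_const]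
  refine tsum_congr fun n => ?_
  rcases n with _ | n
  · simp [eulerCoeff]
  · rw [eulerCoeff, Nat.add_sub_cancel, pow_succ]
    field_simp

theorem add_mul_add_sq_mul_eq_zero_of_hasSum {A B D : ℕ → ℝ} {α β δ w : ℝ}
    (hA : HasSum A α) (hB : HasSum B β) (hD : HasSum D δ) (h₀ : A 0 = 0)
    (h₁ : A 1 + w * B 0 = 0) (h : ∀ n, A (n + 2) + w * B (n + 1) + w ^ 2 * D n = 0) :
    α + w * β + w ^ 2 * δ = 0 := by
  have hA' := (hasSum_nat_add_iff' 2).2 hA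
  have hB' := (hasSum_nat_add_iff' 1).2 hB
  have hzero := (((hA'.add (hB'.mul_left w)).add (hD.mul_left (w ^ 2))).congr_fun
    fun n => (h n).symm).unique hasSum_zero
  simp only [sum_range_succ, range_zero, sum_empty, zero_add] at hzero
  linear_combination hzero + h₀ + h₁

theorem CauchyBounded.hasSum_of_tendsto (h : CauchyBounded R c) (hc : ∀ n, 0 ≤ c n) {ι : Type*}
    {l : Filter ι} [l.NeBot] {x : ι → ℝ} {L : ℝ} (hx : Tendsto x l (𝓝 R))
    (hxR : ∀ᶠ i in l, x i ∈ Set.Ico 0 R) (hL : Tendsto (fun i => powSum c (x i)) l (𝓝 L)) :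
    HasSum (fun n => c n * R ^ n) L := by
  have hR : 0 ≤ R := ge_of_tendsto hx (hxR.mono fun i hi => hi.1)
  have hsum {y : ℝ} (hy : y ∈ Set.Ico 0 R) : HasSum (fun n => c n * y ^ n) (powSum c y) :=
    h.hasSum ((abs_of_nonneg hy.1).trans_lt hy.2)
  refine hasSum_of_isLUB_of_nonneg L (fun n => mul_nonneg (hc n) (pow_nonneg hR n)) ⟨?_, ?_⟩
  · rintro _ ⟨s, rfl⟩
    refine le_of_tendsto_of_tendsto (tendsto_finsetSum s fun n _ => (hx.pow n).const_mul (c n))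
      hL (hxR.mono fun i hi => ?_)
    exact sum_le_hasSum s (fun n _ => mul_nonneg (hc n) (pow_nonneg hi.1 n)) (hsum hi)
  · intro b hb
    refine le_of_tendsto hL (hxR.mono fun i hi => hasSum_le_of_sum_le (hsum hi) fun s => ?_)
    refine (sum_le_sum fun n _ => ?_).trans (hb ⟨s, rfl⟩)
    exact mul_le_mul_of_nonneg_left (pow_le_pow_left₀ hi.1 hi.2.le n) (hc n)

end PowerSeries

section Frobenius

open Filter Topology

theorem smul_deriv_pow_smul {𝕜 E : Type*} [NontriviallyNormedField 𝕜] [NormedAddCommGroup E]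
    [NormedSpace 𝕜 E] {g : 𝕜 → E} {w : 𝕜} (hg : DifferentiableAt 𝕜 g w) (m : ℕ) :
    w • deriv (fun z => z ^ m • g z) w = w ^ m • ((m : 𝕜) • g w + w • deriv g w) := by
  have hderiv : HasDerivAt (fun z => z ^ m • g z) _ w := (hasDerivAt_pow m w).smul hg.hasDerivAt
  rw [hderiv.deriv]
  rcases m with _ | m
  · simp
  · rw [Nat.add_sub_cancel, pow_succ]
    module

/-- Uniqueness in the method of Frobenius: a solution of `w D' = A(w) D` vanishing at the origin
starts with a term `wᵐ g` for which `g` is an eigenvector of `A(0)` with eigenvalue `m`. -/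
theorem eventually_eq_zero_of_fuchsian {𝕜 ι : Type*} [NontriviallyNormedField 𝕜] [CompleteSpace 𝕜]
    [Fintype ι] {D : 𝕜 → ι → 𝕜} {A : 𝕜 → Matrix ι ι 𝕜} (hD : AnalyticAt 𝕜 D 0) (hD₀ : D 0 = 0)
    (hA : ContinuousAt A 0)
    (hA₀ : ∀ m : ℕ, m ≠ 0 → ∀ v, (A 0).mulVec v = (m : 𝕜) • v → v = 0)
    (hode : ∀ᶠ w in 𝓝[≠] 0, w • deriv D w = (A w).mulVec (D w)) :
    ∀ᶠ w in 𝓝 0, D w = 0 := by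
  by_contra hne
  obtain ⟨m, g, hg, hg₀, hDg⟩ := hD.exists_eventuallyEq_pow_smul_nonzero_iff.2 hne
  simp only [sub_zero] at hDg
  have hm : m ≠ 0 := by
    rintro rfl
    exact hg₀ (by simpa [hD₀] using hDg.self_of_nhds.symm)
  have hgode : ∀ᶠ w in 𝓝[≠] 0, (m : 𝕜) • g w + w • deriv g w = (A w).mulVec (g w) := by
    filter_upwards [hode, nhdsWithin_le_nhds hDg.eventually_nhds,
      nhdsWithin_le_nhds hg.eventually_analyticAt, self_mem_nhdsWithin] with w hw hDw hgw hw₀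
    rw [EventuallyEq.deriv_eq hDw, smul_deriv_pow_smul hgw.differentiableAt, hDw.self_of_nhds,
      Matrix.mulVec_smul] at hw
    exact smul_right_injective _ (pow_ne_zero m hw₀) hw
  have hrhs : Tendsto (fun w => (A w).mulVec (g w)) (𝓝[≠] 0) (𝓝 ((A 0).mulVec (g 0))) := by
    refine tendsto_pi_nhds.2 fun i => tendsto_finsetSum univ fun j _ => ?_
    have hAij : ContinuousAt (fun w => A w i j) 0 :=
      continuousAt_pi.1 (continuousAt_pi.1 hA i) j
    exact (hAij.mul (continuousAt_pi.1 hg.continuousAt j)).tendsto.mono_left nhdsWithin_le_nhds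
  have hlhs : Tendsto (fun w => (m : 𝕜) • g w + w • deriv g w) (𝓝[≠] 0) (𝓝 ((m : 𝕜) • g 0)) := by
    have hg' := hg.continuousAt
    have hdg := hg.deriv.continuousAt
    have hcont : ContinuousAt (fun w => (m : 𝕜) • g w + w • deriv g w) 0 := by fun_prop
    simpa using hcont.tendsto.mono_left nhdsWithin_le_nhds
  exact hg₀ (hA₀ m hm _ (tendsto_nhds_unique (hrhs.congr' (hgode.mono fun w h => h.symm)) hlhs))

theorem eventuallyEq_of_fuchsian {ι : Type*} [Fintype ι] {Y Z : ℝ → ι → ℝ} {A : ℝ → Matrix ι ι ℝ}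
    (hY : AnalyticAt ℝ Y 0) (hZ : AnalyticAt ℝ Z 0) (h₀ : Y 0 = Z 0) (hA : ContinuousAt A 0)
    (hA₀ : ∀ m : ℕ, m ≠ 0 → ∀ v, (A 0).mulVec v = (m : ℝ) • v → v = 0)
    (hYode : ∀ᶠ w in 𝓝[≠] 0, HasDerivAt Y (w⁻¹ • (A w).mulVec (Y w)) w)
    (hZode : ∀ᶠ w in 𝓝[≠] 0, HasDerivAt Z (w⁻¹ • (A w).mulVec (Z w)) w) : Y =ᶠ[𝓝 0] Z := by
  have hzero : ∀ᶠ w in 𝓝 0, (Y - Z) w = 0 := by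
    refine eventually_eq_zero_of_fuchsian (hY.sub hZ) (sub_eq_zero.2 h₀) hA hA₀ ?_
    filter_upwards [hYode, hZode, self_mem_nhdsWithin] with w hYw hZw hw
    rw [(hYw.sub hZw).deriv, ← smul_sub, smul_inv_smul₀ hw, Pi.sub_apply, Matrix.mulVec_sub]
  exact hzero.mono fun w hw => sub_eq_zero.1 hw

end Frobenius

section Clausen

open Filter Topology

theorem honeycomb_cauchyBounded : CauchyBounded (1 / 9) honeycomb := by
  rw [one_div]
  exact cauchyBounded_of_le_pow (by norm_num) honeycomb_nonneg honeycomb_le_nine_pow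

theorem simpleCubic_cauchyBounded : CauchyBounded (1 / 36) simpleCubic := by
  rw [one_div]
  exact cauchyBounded_of_le_pow (by norm_num) simpleCubic_nonneg simpleCubic_le_pow

theorem honeycomb_ode {w : ℝ} (hw : |w| < 1 / 9) :
    (1 - 10 * w + 9 * w ^ 2) * powSum (eulerCoeff (eulerCoeff honeycomb)) w =
      (10 * w - 18 * w ^ 2) * powSum (eulerCoeff honeycomb) w
        + (3 * w - 9 * w ^ 2) * powSum honeycomb w := by
  have h := honeycomb_cauchyBounded
  have s₀ := h.hasSum hw
  have s₁ := h.euler.hasSum hw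
  have s₂ := h.euler.euler.hasSum hw
  have key := add_mul_add_sq_mul_eq_zero_of_hasSum (w := w) s₂
    (((s₂.mul_left (-10)).add (s₁.mul_left (-10))).add (s₀.mul_left (-3)))
    (((s₂.mul_left 9).add (s₁.mul_left 18)).add (s₀.mul_left 9))
    (by simp [eulerCoeff]) (by simp [eulerCoeff, honeycomb_zero, honeycomb_one]; ring)
    fun n => by
      simp only [eulerCoeff]
      push_cast
      linear_combination w ^ (n + 2) * honeycomb_recurrence n
  linear_combination key

theorem simpleCubic_ode {x : ℝ} (hx : |x| < 1 / 36) :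
    (1 - 40 * x + 144 * x ^ 2) * powSum (eulerCoeff (eulerCoeff (eulerCoeff simpleCubic))) x =
      (60 * x - 432 * x ^ 2) * powSum (eulerCoeff (eulerCoeff simpleCubic)) x
        + (32 * x - 396 * x ^ 2) * powSum (eulerCoeff simpleCubic) x
        + (6 * x - 108 * x ^ 2) * powSum simpleCubic x := by
  have h := simpleCubic_cauchyBounded
  have s₀ := h.hasSum hx
  have s₁ := h.euler.hasSum hx
  have s₂ := h.euler.euler.hasSum hx
  have s₃ := h.euler.euler.euler.hasSum hx
  have key := add_mul_add_sq_mul_eq_zero_of_hasSum (w := x) s₃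
    ((((s₃.mul_left (-40)).add (s₂.mul_left (-60))).add (s₁.mul_left (-32))).add
      (s₀.mul_left (-6)))
    ((((s₃.mul_left 144).add (s₂.mul_left 432)).add (s₁.mul_left 396)).add (s₀.mul_left 108))
    (by simp [eulerCoeff]) (by simp [eulerCoeff, simpleCubic_zero, simpleCubic_one]; ring)
    fun n => by
      simp only [eulerCoeff]
      push_cast
      linear_combination x ^ (n + 2) * simpleCubic_recurrence n
  linear_combination key

/-- The change of variable `x = x(w)` relating the simple cubic and honeycomb generating
functions. -/
noncomputable def clausenArg (w : ℝ) : ℝ :=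
  w * (1 - 10 * w + 9 * w ^ 2) / (1 - 9 * w ^ 2) ^ 2

/-- The rational square root of the leading coefficient `1 - 40 x + 144 x ^ 2` of the simple cubic
equation in the variable `w`. -/
noncomputable def clausenRoot (w : ℝ) : ℝ :=
  (1 - 2 * w + 9 * w ^ 2) * (1 - 18 * w + 9 * w ^ 2) / (1 - 9 * w ^ 2) ^ 2

/-- The derivation `δ` for which the simple cubic equation becomes `δ³ K = Q δ K + (δ Q / 2) K`,
`Q = 12 x - 108 x ^ 2`, is `δ = clausenRate⁻¹ w d/dw`. -/
noncomputable def clausenRate (w : ℝ) : ℝ := (1 - 9 * w ^ 2) / (1 - 10 * w + 9 * w ^ 2)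

/-- The matrix of the first-order system `w Y' = A(w) Y` for `Y = (K, δ K, δ² K)`. -/
noncomputable def clausenMatrix (w : ℝ) : Matrix (Fin 3) (Fin 3) ℝ :=
  clausenRate w • !![0, 1, 0; 0, 0, 1;
    clausenRoot w * (6 * clausenArg w - 108 * clausenArg w ^ 2),
    12 * clausenArg w - 108 * clausenArg w ^ 2, 0]

theorem clausenRoot_sq {w : ℝ} (hu : 1 - 9 * w ^ 2 ≠ 0) :
    clausenRoot w ^ 2 = 1 - 40 * clausenArg w + 144 * clausenArg w ^ 2 := by
  rw [clausenRoot, clausenArg]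
  generalize hU : 1 - 9 * w ^ 2 = u at *
  field_simp
  subst hU
  ring

theorem hasDerivAt_one_sub_nine_sq (w : ℝ) :
    HasDerivAt (fun w : ℝ => 1 - 9 * w ^ 2) (-18 * w) w := by
  refine (((hasDerivAt_pow 2 w).const_mul 9).const_sub 1).congr_deriv ?_
  norm_num
  ring

theorem hasDerivAt_one_sub_mul_add_nine_sq (a w : ℝ) :
    HasDerivAt (fun w : ℝ => 1 - a * w + 9 * w ^ 2) (-a + 18 * w) w := by
  refine ((((hasDerivAt_id w).const_mul a).const_sub 1).add
    ((hasDerivAt_pow 2 w).const_mul 9)).congr_deriv ?_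
  norm_num
  ring

theorem hasDerivAt_clausenArg {w : ℝ} (hw : w ≠ 0) (hu : 1 - 9 * w ^ 2 ≠ 0)
    (hP : 1 - 10 * w + 9 * w ^ 2 ≠ 0) :
    HasDerivAt clausenArg (w⁻¹ * clausenRate w * (clausenRoot w * clausenArg w)) w := by
  refine (((hasDerivAt_id w).mul (hasDerivAt_one_sub_mul_add_nine_sq 10 w)).div
    ((hasDerivAt_one_sub_nine_sq w).pow 2) (pow_ne_zero 2 hu)).congr_deriv ?_
  simp only [id, Pi.mul_apply, Pi.pow_apply, clausenRate, clausenRoot, clausenArg]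
  generalize hU : 1 - 9 * w ^ 2 = u at *
  generalize hV : 1 - 10 * w + 9 * w ^ 2 = p at *
  field_simp
  subst hU hV
  push_cast
  ring

theorem hasDerivAt_clausenRoot {w : ℝ} (hw : w ≠ 0) (hu : 1 - 9 * w ^ 2 ≠ 0)
    (hP : 1 - 10 * w + 9 * w ^ 2 ≠ 0) :
    HasDerivAt clausenRoot
      (w⁻¹ * clausenRate w * (-20 * clausenArg w + 144 * clausenArg w ^ 2)) w := by
  refine (((hasDerivAt_one_sub_mul_add_nine_sq 2 w).mul
    (hasDerivAt_one_sub_mul_add_nine_sq 18 w)).div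
    ((hasDerivAt_one_sub_nine_sq w).pow 2) (pow_ne_zero 2 hu)).congr_deriv ?_
  simp only [Pi.mul_apply, Pi.pow_apply, clausenRate, clausenArg]
  generalize hU : 1 - 9 * w ^ 2 = u at *
  generalize hV : 1 - 10 * w + 9 * w ^ 2 = p at *
  field_simp
  subst hU hV
  push_cast
  ring

/-- The triple `(K, δ K, δ² K)` for the simple cubic generating function `K` at
`x = clausenArg w`. -/
noncomputable def simpleCubicTriple (w : ℝ) : Fin 3 → ℝ :=
  ![powSum simpleCubic (clausenArg w),
    clausenRoot w * powSum (eulerCoeff simpleCubic) (clausenArg w),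
    (1 - 40 * clausenArg w + 144 * clausenArg w ^ 2)
        * powSum (eulerCoeff (eulerCoeff simpleCubic)) (clausenArg w)
      + (-20 * clausenArg w + 144 * clausenArg w ^ 2)
        * powSum (eulerCoeff simpleCubic) (clausenArg w)]

/-- `√(1 - 9 w²) δ y` for `y = √(1 - 9 w²) f`, where `f` is the honeycomb generating function. -/
noncomputable def honeycombDelta (w : ℝ) : ℝ :=
  (1 - 10 * w + 9 * w ^ 2) *
    (powSum (eulerCoeff honeycomb) w - 9 * w ^ 2 / (1 - 9 * w ^ 2) * powSum honeycomb w)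

/-- The triple `(y², δ (y²), δ² (y²)) = (y², 2 y δy, 2 (δy)² + Q y² / 2)` for
`y = √(1 - 9 w²) f`, which satisfies `δ² y = (Q / 4) y`. -/
noncomputable def honeycombTriple (w : ℝ) : Fin 3 → ℝ :=
  ![(1 - 9 * w ^ 2) * powSum honeycomb w ^ 2,
    2 * powSum honeycomb w * honeycombDelta w,
    2 * honeycombDelta w ^ 2 / (1 - 9 * w ^ 2)
      + (6 * clausenArg w - 54 * clausenArg w ^ 2)
        * ((1 - 9 * w ^ 2) * powSum honeycomb w ^ 2)]

theorem hasDerivAt_clausenMatrix {Y₀ Y₁ Y₂ : ℝ → ℝ} {w : ℝ}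
    (h₀ : HasDerivAt Y₀ (w⁻¹ * clausenRate w * Y₁ w) w)
    (h₁ : HasDerivAt Y₁ (w⁻¹ * clausenRate w * Y₂ w) w)
    (h₂ : HasDerivAt Y₂ (w⁻¹ * clausenRate w *
      (clausenRoot w * (6 * clausenArg w - 108 * clausenArg w ^ 2) * Y₀ w
        + (12 * clausenArg w - 108 * clausenArg w ^ 2) * Y₁ w)) w) :
    HasDerivAt (fun w => ![Y₀ w, Y₁ w, Y₂ w])
      (w⁻¹ • (clausenMatrix w).mulVec ![Y₀ w, Y₁ w, Y₂ w]) w := by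
  have hmul : w⁻¹ • (clausenMatrix w).mulVec ![Y₀ w, Y₁ w, Y₂ w] =
      ![w⁻¹ * clausenRate w * Y₁ w, w⁻¹ * clausenRate w * Y₂ w, w⁻¹ * clausenRate w *
        (clausenRoot w * (6 * clausenArg w - 108 * clausenArg w ^ 2) * Y₀ w
          + (12 * clausenArg w - 108 * clausenArg w ^ 2) * Y₁ w)] := by
    rw [clausenMatrix, Matrix.smul_mulVec, smul_smul]
    ext i
    fin_cases i <;> simp [mul_comm (Y₀ w), mul_comm (Y₁ w)]
  rw [hmul, hasDerivAt_pi]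
  intro i
  fin_cases i
  exacts [h₀, h₁, h₂]

theorem hasDerivAt_powSum_clausenArg {c : ℕ → ℝ} (hc : CauchyBounded (1 / 36) c) {w : ℝ}
    (hw : w ≠ 0) (hu : 1 - 9 * w ^ 2 ≠ 0) (hP : 1 - 10 * w + 9 * w ^ 2 ≠ 0)
    (hx : |clausenArg w| < 1 / 36) :
    HasDerivAt (fun w => powSum c (clausenArg w))
      (w⁻¹ * clausenRate w * (clausenRoot w * powSum (eulerCoeff c) (clausenArg w))) w := by
  have hx₀ : clausenArg w ≠ 0 := div_ne_zero (mul_ne_zero hw hP) (pow_ne_zero 2 hu)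
  refine ((hc.hasDerivAt hx₀ hx).comp w (hasDerivAt_clausenArg hw hu hP)).congr_deriv ?_
  field_simp

theorem hasDerivAt_simpleCubicTriple {w : ℝ} (hw : w ≠ 0) (hu : 1 - 9 * w ^ 2 ≠ 0)
    (hP : 1 - 10 * w + 9 * w ^ 2 ≠ 0) (hx : |clausenArg w| < 1 / 36) :
    HasDerivAt simpleCubicTriple (w⁻¹ • (clausenMatrix w).mulVec (simpleCubicTriple w)) w := by
  have hK := hasDerivAt_powSum_clausenArg simpleCubic_cauchyBounded hw hu hP hx
  have hK₁ := hasDerivAt_powSum_clausenArg simpleCubic_cauchyBounded.euler hw hu hP hx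
  have hK₂ := hasDerivAt_powSum_clausenArg simpleCubic_cauchyBounded.euler.euler hw hu hP hx
  have hX := hasDerivAt_clausenArg hw hu hP
  have hS := hasDerivAt_clausenRoot hw hu hP
  refine hasDerivAt_clausenMatrix hK ((hS.mul hK₁).congr_deriv ?_)
    ((((((hX.const_mul 40).const_sub 1).add ((hX.pow 2).const_mul 144)).mul hK₂).add
      (((hX.const_mul (-20)).add ((hX.pow 2).const_mul 144)).mul hK₁)).congr_deriv ?_)
  · linear_combination w⁻¹ * clausenRate w *
      powSum (eulerCoeff (eulerCoeff simpleCubic)) (clausenArg w) * clausenRoot_sq hu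
  · simp only [Pi.add_apply, Pi.pow_apply]
    push_cast
    linear_combination w⁻¹ * clausenRate w * clausenRoot w * simpleCubic_ode hx

theorem hasDerivAt_powSum_honeycomb {w : ℝ} (hw : w ≠ 0) (hu : 1 - 9 * w ^ 2 ≠ 0)
    (hP : 1 - 10 * w + 9 * w ^ 2 ≠ 0) (hw9 : |w| < 1 / 9) :
    HasDerivAt (powSum honeycomb) (w⁻¹ * clausenRate w * (honeycombDelta w / (1 - 9 * w ^ 2)
      + 9 * w ^ 2 * (1 - 10 * w + 9 * w ^ 2) / (1 - 9 * w ^ 2) ^ 2 * powSum honeycomb w)) w := by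
  refine (honeycomb_cauchyBounded.hasDerivAt hw hw9).congr_deriv ?_
  rw [honeycombDelta, clausenRate]
  generalize 1 - 9 * w ^ 2 = u at *
  generalize 1 - 10 * w + 9 * w ^ 2 = p at *
  field_simp
  ring

theorem hasDerivAt_honeycombDelta {w : ℝ} (hw : w ≠ 0) (hu : 1 - 9 * w ^ 2 ≠ 0)
    (hP : 1 - 10 * w + 9 * w ^ 2 ≠ 0) (hw9 : |w| < 1 / 9) :
    HasDerivAt honeycombDelta (w⁻¹ * clausenRate w *
      ((1 - 9 * w ^ 2) * (3 * clausenArg w - 27 * clausenArg w ^ 2) * powSum honeycomb w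
        - 9 * w ^ 2 * (1 - 10 * w + 9 * w ^ 2) / (1 - 9 * w ^ 2) ^ 2 * honeycombDelta w)) w := by
  have hf := honeycomb_cauchyBounded.hasDerivAt hw hw9
  have hf₁ := honeycomb_cauchyBounded.euler.hasDerivAt hw hw9
  have hquot := ((hasDerivAt_pow 2 w).const_mul 9).div (hasDerivAt_one_sub_nine_sq w) hu
  refine ((hasDerivAt_one_sub_mul_add_nine_sq 10 w).mul
    (hf₁.sub (hquot.mul hf))).congr_deriv ?_
  have hode := honeycomb_ode hw9
  rw [mul_comm, ← eq_div_iff hP] at hode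
  simp only [Pi.sub_apply, Pi.mul_apply, Pi.div_apply, honeycombDelta, clausenRate, clausenArg,
    hode]
  generalize hU : 1 - 9 * w ^ 2 = u at *
  generalize hV : 1 - 10 * w + 9 * w ^ 2 = p at *
  field_simp
  subst hU hV
  push_cast
  ring

theorem hasDerivAt_honeycombTriple {w : ℝ} (hw : w ≠ 0) (hu : 1 - 9 * w ^ 2 ≠ 0)
    (hP : 1 - 10 * w + 9 * w ^ 2 ≠ 0) (hw9 : |w| < 1 / 9) :
    HasDerivAt honeycombTriple (w⁻¹ • (clausenMatrix w).mulVec (honeycombTriple w)) w := by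
  have hf := hasDerivAt_powSum_honeycomb hw hu hP hw9
  have hg := hasDerivAt_honeycombDelta hw hu hP hw9
  have hX := hasDerivAt_clausenArg hw hu hP
  have hv := hasDerivAt_one_sub_nine_sq w
  have hy := hv.mul (hf.pow 2)
  refine hasDerivAt_clausenMatrix (hy.congr_deriv ?_)
    (((hf.const_mul 2).mul hg).congr_deriv ?_)
    (((((hg.pow 2).const_mul 2).div hv hu).add
      (((hX.const_mul 6).sub ((hX.pow 2).const_mul 54)).mul hy)).congr_deriv ?_)
  all_goals
    simp only [Pi.sub_apply, Pi.mul_apply, Pi.pow_apply, clausenRate]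
    generalize powSum honeycomb w = f
    generalize honeycombDelta w = g
    generalize clausenArg w = x
    generalize clausenRoot w = r
    generalize 1 - 9 * w ^ 2 = u at *
    generalize 1 - 10 * w + 9 * w ^ 2 = p at *
    field_simp
    push_cast
    ring

theorem analyticAt_clausenArg {w : ℝ} (h : 1 - 9 * w ^ 2 ≠ 0) : AnalyticAt ℝ clausenArg w := by
  unfold clausenArg
  fun_prop (disch := exact pow_ne_zero 2 h)

theorem analyticAt_powSum_clausenArg {c : ℕ → ℝ} (hc : CauchyBounded (1 / 36) c) {w : ℝ}
    (hu : 1 - 9 * w ^ 2 ≠ 0) (hx : |clausenArg w| < 1 / 36) :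
    AnalyticAt ℝ (fun w => powSum c (clausenArg w)) w :=
  (hc.analyticAt hx).comp (analyticAt_clausenArg hu)

theorem analyticAt_simpleCubicTriple_zero : AnalyticAt ℝ simpleCubicTriple 0 := by
  have hu : (1 - 9 * 0 ^ 2 : ℝ) ≠ 0 := by norm_num
  have hx : |clausenArg 0| < 1 / 36 := by norm_num [clausenArg]
  have hX := analyticAt_clausenArg hu
  have hK := analyticAt_powSum_clausenArg simpleCubic_cauchyBounded hu hx
  have hK₁ := analyticAt_powSum_clausenArg simpleCubic_cauchyBounded.euler hu hx
  have hK₂ := analyticAt_powSum_clausenArg simpleCubic_cauchyBounded.euler.euler hu hx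
  have hS : AnalyticAt ℝ clausenRoot 0 := by
    unfold clausenRoot
    fun_prop (disch := norm_num)
  rw [analyticAt_pi_iff]
  intro i
  fin_cases i
  · exact hK
  · exact hS.mul hK₁
  · exact AnalyticAt.add (AnalyticAt.mul (by fun_prop) hK₂) (AnalyticAt.mul (by fun_prop) hK₁)

theorem analyticAt_honeycombTriple_zero : AnalyticAt ℝ honeycombTriple 0 := by
  have hX : AnalyticAt ℝ clausenArg 0 := analyticAt_clausenArg (by norm_num)
  have hf := honeycomb_cauchyBounded.analyticAt (w := 0) (by norm_num)
  have hf₁ := honeycomb_cauchyBounded.euler.analyticAt (w := 0) (by norm_num)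
  have hg : AnalyticAt ℝ honeycombDelta 0 := by
    unfold honeycombDelta
    fun_prop (disch := norm_num)
  rw [analyticAt_pi_iff]
  intro i
  fin_cases i
  · exact AnalyticAt.mul (by fun_prop) (hf.pow 2)
  · exact (analyticAt_const.mul hf).mul hg
  · exact ((analyticAt_const.mul (hg.pow 2)).div (by fun_prop) (by norm_num)).add
      (AnalyticAt.mul (by fun_prop) (AnalyticAt.mul (by fun_prop) (hf.pow 2)))

theorem simpleCubicTriple_zero : simpleCubicTriple 0 = honeycombTriple 0 := by
  simp [simpleCubicTriple, honeycombTriple, honeycombDelta, clausenArg, powSum_zero,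
    eulerCoeff, simpleCubic_zero, honeycomb_zero]

theorem continuousAt_clausenMatrix_zero : ContinuousAt clausenMatrix 0 := by
  unfold clausenMatrix clausenRate clausenRoot clausenArg
  fun_prop (disch := norm_num)

theorem clausenMatrix_zero_mulVec_eq {m : ℝ} (hm : m ≠ 0) {v : Fin 3 → ℝ}
    (h : (clausenMatrix 0).mulVec v = m • v) : v = 0 := by
  have hnil : clausenMatrix 0 ^ 3 = 0 := by
    ext i j
    fin_cases i <;> fin_cases j <;>
      simp [clausenMatrix, clausenRate, clausenRoot, clausenArg, pow_succ, Matrix.mul_apply,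
        Fin.sum_univ_three]
  have hpow : (clausenMatrix 0 ^ 3).mulVec v = m ^ 3 • v := by
    simp only [pow_succ, pow_zero, one_mul, ← Matrix.mulVec_mulVec, h, Matrix.mulVec_smul,
      smul_smul, mul_assoc]
  rw [hnil, Matrix.zero_mulVec] at hpow
  exact (smul_eq_zero.1 hpow.symm).resolve_left (pow_ne_zero 3 hm)

theorem simpleCubicTriple_eventuallyEq : simpleCubicTriple =ᶠ[𝓝 0] honeycombTriple := by
  have hu : ∀ᶠ w : ℝ in 𝓝 0, 1 - 9 * w ^ 2 ≠ 0 :=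
    ContinuousAt.eventually_ne (by fun_prop) (by norm_num)
  have hP : ∀ᶠ w : ℝ in 𝓝 0, 1 - 10 * w + 9 * w ^ 2 ≠ 0 :=
    ContinuousAt.eventually_ne (by fun_prop) (by norm_num)
  have hw9 : ∀ᶠ w : ℝ in 𝓝 0, |w| < 1 / 9 :=
    ContinuousAt.eventually_lt (by fun_prop) continuousAt_const (by norm_num)
  have hx : ∀ᶠ w in 𝓝 0, |clausenArg w| < 1 / 36 :=
    (analyticAt_clausenArg (by norm_num)).continuousAt.abs.eventually_lt continuousAt_const
      (by norm_num [clausenArg])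
  refine eventuallyEq_of_fuchsian analyticAt_simpleCubicTriple_zero analyticAt_honeycombTriple_zero
    simpleCubicTriple_zero continuousAt_clausenMatrix_zero
    (fun m hm v => clausenMatrix_zero_mulVec_eq (Nat.cast_ne_zero.2 hm)) ?_ ?_
  · filter_upwards [nhdsWithin_le_nhds hu, nhdsWithin_le_nhds hP, nhdsWithin_le_nhds hx,
      self_mem_nhdsWithin] with w hu hP hx hw using hasDerivAt_simpleCubicTriple hw hu hP hx
  · filter_upwards [nhdsWithin_le_nhds hu, nhdsWithin_le_nhds hP, nhdsWithin_le_nhds hw9,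
      self_mem_nhdsWithin] with w hu hP hw9 hw using hasDerivAt_honeycombTriple hw hu hP hw9

theorem clausen_factors_pos {w : ℝ} (h0 : 0 ≤ w) (h9 : w < 1 / 9) :
    0 < 1 - 9 * w ^ 2 ∧ 0 < 1 - 10 * w + 9 * w ^ 2 :=
  ⟨by nlinarith, by nlinarith⟩

theorem one_sub_clausenArg {w : ℝ} (h : 1 - 9 * w ^ 2 ≠ 0) :
    1 - 36 * clausenArg w = ((1 - 18 * w + 9 * w ^ 2) / (1 - 9 * w ^ 2)) ^ 2 := by
  rw [clausenArg]
  generalize hU : 1 - 9 * w ^ 2 = u at *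
  field_simp
  subst hU
  ring

/-- The smaller root of `1 - 18 w + 9 w²`, which `clausenArg` maps to `1 / 36`. -/
noncomputable def criticalArg : ℝ := 1 - 2 * √2 / 3

theorem criticalArg_root : 1 - 18 * criticalArg + 9 * criticalArg ^ 2 = 0 := by
  rw [criticalArg]
  linear_combination 4 * Real.sq_sqrt (zero_le_two (α := ℝ))

theorem criticalArg_mem : criticalArg ∈ Set.Ioo 0 (1 / 9) := by
  have hlow : (1.4 : ℝ) < √2 := Real.lt_sqrt_of_sq_lt (by norm_num)
  have hupp : √2 < (1.5 : ℝ) := by rw [Real.sqrt_lt' (by norm_num)]; norm_num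
  constructor <;> rw [criticalArg] <;> linarith

theorem clausenArg_mem {w : ℝ} (hw : w ∈ Set.Ico 0 criticalArg) :
    clausenArg w ∈ Set.Ico 0 (1 / 36) := by
  obtain ⟨hu, hP⟩ := clausen_factors_pos hw.1 (hw.2.trans criticalArg_mem.2)
  have hq : 0 < 1 - 18 * w + 9 * w ^ 2 := by
    nlinarith [criticalArg_root, criticalArg_mem.2, hw.2]
  have hw₀ := hw.1
  have hpos : 0 < 1 - 36 * clausenArg w := by
    rw [one_sub_clausenArg hu.ne']
    positivity
  exact ⟨by rw [clausenArg]; positivity, by linarith⟩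

/-- Clausen's identity: the simple cubic equation is the symmetric square of the honeycomb
equation. -/
theorem powSum_simpleCubic_clausenArg {w : ℝ} (hw : w ∈ Set.Ico 0 criticalArg) :
    powSum simpleCubic (clausenArg w) = (1 - 9 * w ^ 2) * powSum honeycomb w ^ 2 := by
  have hL : AnalyticOnNhd ℝ (fun w => powSum simpleCubic (clausenArg w)) (Set.Ico 0 criticalArg) :=
    fun v hv => by
      have hx := clausenArg_mem hv
      exact analyticAt_powSum_clausenArg simpleCubic_cauchyBounded
        (clausen_factors_pos hv.1 (hv.2.trans criticalArg_mem.2)).1.ne'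
        (by rw [abs_of_nonneg hx.1]; exact hx.2)
  have hR : AnalyticOnNhd ℝ (fun w => (1 - 9 * w ^ 2) * powSum honeycomb w ^ 2)
      (Set.Ico 0 criticalArg) := fun v hv =>
    AnalyticAt.mul (by fun_prop) ((honeycomb_cauchyBounded.analyticAt
      (by rw [abs_of_nonneg hv.1]; exact hv.2.trans criticalArg_mem.2)).pow 2)
  exact hL.eqOn_of_preconnected_of_eventuallyEq hR isPreconnected_Ico
    (Set.left_mem_Ico.2 criticalArg_mem.1)
    (simpleCubicTriple_eventuallyEq.mono fun v hv => congrFun hv 0) hw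

theorem clausenArg_criticalArg : clausenArg criticalArg = 1 / 36 := by
  have h := one_sub_clausenArg
    (clausen_factors_pos criticalArg_mem.1.le criticalArg_mem.2).1.ne'
  rw [criticalArg_root, zero_div] at h
  linarith

theorem hasSum_simpleCubic_one_div :
    HasSum (fun n => simpleCubic n * (1 / 36) ^ n)
      ((1 - 9 * criticalArg ^ 2) * powSum honeycomb criticalArg ^ 2) := by
  have hmem := criticalArg_mem
  have hf : ContinuousAt (powSum honeycomb) criticalArg :=
    honeycomb_cauchyBounded.continuousAt (by rw [abs_of_pos hmem.1]; exact hmem.2)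
  have hx : ContinuousAt clausenArg criticalArg :=
    (analyticAt_clausenArg (clausen_factors_pos hmem.1.le hmem.2).1.ne').continuousAt
  have hlim : ContinuousAt (fun w => (1 - 9 * w ^ 2) * powSum honeycomb w ^ 2) criticalArg := by
    fun_prop
  have hev : ∀ᶠ w in 𝓝[<] criticalArg, w ∈ Set.Ico 0 criticalArg := by
    filter_upwards [Ioo_mem_nhdsLT hmem.1] with w hw using ⟨hw.1.le, hw.2⟩
  refine simpleCubic_cauchyBounded.hasSum_of_tendsto simpleCubic_nonneg (l := 𝓝[<] criticalArg)
    (x := clausenArg) ?_ (hev.mono fun w => clausenArg_mem)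
    ((hlim.tendsto.mono_left nhdsWithin_le_nhds).congr'
      (hev.mono fun w hw => (powSum_simpleCubic_clausenArg hw).symm))
  rw [← clausenArg_criticalArg]
  exact hx.tendsto.mono_left nhdsWithin_le_nhds

end Clausen

section Gamma

theorem convexOn_sum {ι : Type*} {t : Finset ι} {f : ι → ℝ → ℝ} {s : Set ℝ} (hs : Convex ℝ s)
    (hf : ∀ i ∈ t, ConvexOn ℝ s (f i)) : ConvexOn ℝ s fun x => ∑ i ∈ t, f i x := by
  classical
  induction t using Finset.induction_on with
  | empty => simpa using convexOn_const 0 hs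
  | insert i t hi ih =>
    simp only [sum_insert hi]
    exact (hf i (mem_insert_self i t)).add (ih fun j hj => hf j (mem_insert_of_mem hj))

theorem convexOn_log_Gamma_add_div {m c : ℝ} (hm : 0 < m) (hc : 0 ≤ c) :
    ConvexOn ℝ (Set.Ioi 0) fun s => log (Gamma ((s + c) / m)) := by
  have hmaps : Set.Ioi (0 : ℝ) ⊆ (fun s => m⁻¹ • (s + c)) ⁻¹' Set.Ioi 0 := fun s hs => by
    have hs' : 0 < s := hs
    simp only [Set.mem_preimage, Set.mem_Ioi, smul_eq_mul]
    positivity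
  have h := (convexOn_log_Gamma.comp_affineMap
    (m⁻¹ • (AffineMap.id ℝ ℝ + AffineMap.const ℝ ℝ c))).subset hmaps (convex_Ioi 0)
  refine h.congr fun s _ => ?_
  simp [div_eq_inv_mul, mul_add]

theorem prod_Gamma_add_one_add_div {m : ℕ} (hm : 0 < m) {y : ℝ} (hy : 0 < y) :
    ∏ k ∈ range m, Gamma ((y + 1 + k) / m) = y / m * ∏ k ∈ range m, Gamma ((y + k) / m) := by
  have hy₀ : Gamma (y / m) ≠ 0 := (Gamma_pos_of_pos (by positivity)).ne'
  have hlast : (y + m) / m = y / m + 1 := by field_simp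
  have hshift := (prod_range_succ' (fun k : ℕ => Gamma ((y + k) / m)) m).symm.trans
    (prod_range_succ _ m)
  rw [hlast, Gamma_add_one (by positivity), Nat.cast_zero, add_zero, ← mul_assoc] at hshift
  refine mul_right_cancel₀ hy₀ (Eq.trans ?_ (hshift.trans (by ring)))
  simp only [Nat.cast_succ, add_assoc, add_comm (1 : ℝ)]

/-- Gauss's multiplication formula, up to the value of the constant. By the Bohr–Mollerup theorem,
the left-hand side determines `Γ` as a log-convex solution of the functional equation. -/
theorem prod_Gamma_add_div {m : ℕ} (hm : 0 < m) {s : ℝ} (hs : 0 < s) :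
    ∏ k ∈ range m, Gamma ((s + k) / m) =
      (∏ k ∈ range m, Gamma ((1 + k) / m)) * (m : ℝ) ^ (1 - s) * Gamma s := by
  have hm₀ : (0 : ℝ) < m := Nat.cast_pos.2 hm
  have hΓ {x : ℝ} (hx : 0 < x) (k : ℕ) : 0 < Gamma ((x + k) / m) :=
    Gamma_pos_of_pos (by positivity)
  have hprod {x : ℝ} (hx : 0 < x) : 0 < ∏ k ∈ range m, Gamma ((x + k) / m) :=
    prod_pos fun k _ => hΓ hx k
  set C : ℝ := ∏ k ∈ range m, Gamma ((1 + k) / m)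
  have hC : 0 < C := hprod one_pos
  let g : ℝ → ℝ := fun x => (∏ k ∈ range m, Gamma ((x + k) / m)) * (m : ℝ) ^ (x - 1) / C
  have hconv : ConvexOn ℝ (Set.Ioi 0) (log ∘ g) := by
    have hsum : ConvexOn ℝ (Set.Ioi 0) fun x => ∑ k ∈ range m, log (Gamma ((x + k) / m)) :=
      convexOn_sum (convex_Ioi 0) fun k _ => convexOn_log_Gamma_add_div hm₀ k.cast_nonneg
    have hlin := (convexOn_id (𝕜 := ℝ) (convex_Ioi (0 : ℝ))).smul
      (log_nonneg (Nat.one_le_cast.2 hm))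
    refine ((hsum.add hlin).add_const (-log m - log C)).congr fun x hx => ?_
    simp only [Function.comp_apply, g, Pi.add_apply, id, smul_eq_mul]
    rw [log_div (mul_pos (hprod hx) (by positivity)).ne' hC.ne',
      log_mul (hprod hx).ne' (by positivity), log_prod fun k _ => (hΓ hx k).ne', log_rpow hm₀]
    ring
  have hg : g s = Gamma s := by
    refine eq_Gamma_of_log_convex hconv (fun {y} hy => ?_)
      (fun {y} hy => div_pos (mul_pos (hprod hy) (by positivity)) hC) ?_ hs
    · simp only [g]
      rw [prod_Gamma_add_one_add_div hm hy, add_sub_right_comm, rpow_add_one hm₀.ne']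
      field_simp
    · simp only [g, sub_self, rpow_zero, mul_one]
      exact div_self hC.ne'
  rw [← hg, ← neg_sub s 1, rpow_neg hm₀.le]
  simp only [g]
  field_simp

theorem Gamma_one_third_mul_two_thirds : Gamma (1 / 3) * Gamma (2 / 3) = 2 * π / √3 := by
  have h := Gamma_mul_Gamma_one_sub (1 / 3)
  rw [show (1 : ℝ) - 1 / 3 = 2 / 3 by norm_num, show π * (1 / 3) = π / 3 by ring,
    sin_pi_div_three] at h
  rw [h]
  field_simp

theorem Gamma_triplication {s : ℝ} (hs : 0 < s) :
    Gamma (s / 3) * Gamma ((s + 1) / 3) * Gamma ((s + 2) / 3) =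
      2 * π / √3 * 3 ^ (1 - s) * Gamma s := by
  have h := prod_Gamma_add_div (m := 3) (by norm_num) hs
  norm_num [prod_range_succ] at h
  rw [h, Gamma_one_third_mul_two_thirds]

theorem Gamma_one_fourth_mul_three_fourths : Gamma (1 / 4) * Gamma (3 / 4) = π * √2 := by
  have h := Gamma_mul_Gamma_one_sub (1 / 4)
  rw [show (1 : ℝ) - 1 / 4 = 3 / 4 by norm_num, show π * (1 / 4) = π / 4 by ring,
    sin_pi_div_four] at h
  rw [h]
  field_simp
  exact (sq_sqrt zero_le_two).symm

theorem sin_eleven_mul_sin_seven :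
    sin (π * (11 / 24)) * sin (π * (7 / 24)) = (√3 + √2) / 4 := by
  have h1 := cos_sub (π * (11 / 24)) (π * (7 / 24))
  have h2 := cos_add (π * (11 / 24)) (π * (7 / 24))
  rw [show π * (11 / 24) - π * (7 / 24) = π / 6 by ring, cos_pi_div_six] at h1
  rw [show π * (11 / 24) + π * (7 / 24) = π - π / 4 by ring, cos_pi_sub, cos_pi_div_four] at h2
  linarith

theorem Gamma_one_twelfth_mul_five_twelfths :
    Gamma (1 / 12) * Gamma (5 / 12) * Gamma (3 / 4) =
      2 * π * 3 ^ (1 / 4 : ℝ) * Gamma (1 / 4) := by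
  have ht := Gamma_triplication (s := 1 / 4) (by norm_num)
  have h3 : (3 : ℝ) ^ (3 / 4 : ℝ) = 3 ^ (1 / 4 : ℝ) * √3 := by
    rw [sqrt_eq_rpow, ← rpow_add (by norm_num)]
    norm_num
  norm_num at ht
  rw [ht, h3]
  field_simp

theorem Gamma_duplication_product :
    Gamma (1 / 24) * Gamma (5 / 24) * (Gamma (13 / 24) * Gamma (17 / 24)) =
      2 * √2 * π * (Gamma (1 / 12) * Gamma (5 / 12)) := by
  have h1 := Gamma_mul_Gamma_add_half (1 / 24)
  have h5 := Gamma_mul_Gamma_add_half (5 / 24)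
  have h2 : (2 : ℝ) ^ (11 / 12 : ℝ) * 2 ^ (7 / 12 : ℝ) = 2 * √2 := by
    rw [← rpow_add (by norm_num), sqrt_eq_rpow,
      show (11 / 12 : ℝ) + 7 / 12 = 1 + 1 / 2 by norm_num, rpow_add (by norm_num), rpow_one]
  norm_num at h1 h5
  rw [← h2, ← mul_self_sqrt pi_pos.le]
  linear_combination Gamma (5 / 24) * Gamma (17 / 24) * h1 +
    Gamma (1 / 12) * 2 ^ (11 / 12 : ℝ) * √π * h5

theorem Gamma_reflection_product :
    Gamma (7 / 24) * Gamma (11 / 24) * (Gamma (13 / 24) * Gamma (17 / 24)) * (√3 + √2) =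
      4 * π ^ 2 := by
  have h11 := Gamma_mul_Gamma_one_sub (11 / 24)
  have h7 := Gamma_mul_Gamma_one_sub (7 / 24)
  have s11 : 0 < sin (π * (11 / 24)) :=
    sin_pos_of_pos_of_lt_pi (by positivity) (by linarith [pi_pos])
  have s7 : 0 < sin (π * (7 / 24)) :=
    sin_pos_of_pos_of_lt_pi (by positivity) (by linarith [pi_pos])
  rw [eq_div_iff s11.ne'] at h11
  rw [eq_div_iff s7.ne'] at h7
  norm_num at h11 h7
  linear_combination 4 * Gamma (7 / 24) * Gamma (17 / 24) * sin (π * (7 / 24)) * h11 +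
    4 * π * h7 - 4 * (Gamma (7 / 24) * Gamma (11 / 24) * (Gamma (13 / 24) * Gamma (17 / 24))) *
      sin_eleven_mul_sin_seven

open ProbabilityTheory in
theorem beta_mul_beta :
    beta (1 / 24) (5 / 24) * beta (7 / 24) (11 / 24) =
      Gamma (1 / 24) * Gamma (5 / 24) * Gamma (7 / 24) * Gamma (11 / 24) / (π * √2) := by
  rw [beta, beta, ← Gamma_one_fourth_mul_three_fourths]
  norm_num
  field_simp

open ProbabilityTheory in
theorem beta_one_five_eq :
    beta (1 / 24) (5 / 24) = √2 * 3 ^ (1 / 4 : ℝ) * (√3 + √2) * beta (7 / 24) (11 / 24) := by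
  have hΓ {x : ℝ} (hx : 0 < x) : 0 < Gamma x := Gamma_pos_of_pos hx
  rw [beta, beta, show (1 / 24 : ℝ) + 5 / 24 = 1 / 4 by norm_num,
    show (7 / 24 : ℝ) + 11 / 24 = 3 / 4 by norm_num, mul_div_assoc',
    div_eq_div_iff (hΓ (by norm_num)).ne' (hΓ (by norm_num)).ne']
  refine mul_right_cancel₀ (mul_pos (hΓ (x := 13 / 24) (by norm_num))
    (hΓ (x := 17 / 24) (by norm_num))).ne' ?_
  linear_combination Gamma (3 / 4) * Gamma_duplication_product
    + 2 * √2 * π * Gamma_one_twelfth_mul_five_twelfths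
    - √2 * 3 ^ (1 / 4 : ℝ) * Gamma (1 / 4) * Gamma_reflection_product

end Gamma

section BetaIntegrals

open MeasureTheory ProbabilityTheory Set

theorem setIntegral_beta {a b : ℝ} (ha : 0 < a) (hb : 0 < b) :
    ∫ x in Ioo (0 : ℝ) 1, x ^ (a - 1) * (1 - x) ^ (b - 1) = beta a b := by
  rw [beta_eq_betaIntegralReal a b ha hb, Complex.betaIntegral,
    intervalIntegral.integral_of_le zero_le_one, ← integral_Ioc_eq_integral_Ioo]
  have hint : IntegrableOn (fun x : ℝ => (x : ℂ) ^ ((a : ℂ) - 1) * (1 - (x : ℂ)) ^ ((b : ℂ) - 1))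
      (Ioc 0 1) := by
    have := Complex.betaIntegral_convergent (u := a) (v := b) (by simpa) (by simpa)
    rwa [intervalIntegrable_iff_integrableOn_Ioc_of_le zero_le_one] at this
  rw [← RCLike.re_to_complex, ← integral_re hint]
  refine setIntegral_congr_fun measurableSet_Ioc fun x hx => ?_
  have hx₁ : 0 ≤ 1 - x := sub_nonneg.2 hx.2
  simp only [RCLike.re_to_complex]
  rw [← Complex.ofReal_one, ← Complex.ofReal_sub, ← Complex.ofReal_sub, ← Complex.ofReal_sub,
    ← Complex.ofReal_cpow hx.1.le, ← Complex.ofReal_cpow hx₁, ← Complex.ofReal_mul,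
    Complex.ofReal_re]

theorem integrableOn_beta {a b : ℝ} (ha : 0 < a) (hb : 0 < b) :
    IntegrableOn (fun x : ℝ => x ^ (a - 1) * (1 - x) ^ (b - 1)) (Ioo 0 1) :=
  .of_integral_ne_zero (by rw [setIntegral_beta ha hb]; exact (beta_pos ha hb).ne')

theorem setIntegral_Ioo_one_eq_add_comp_one_sub {f : ℝ → ℝ} (hf : IntegrableOn f (Ioo 0 1)) :
    ∫ x in Ioo (0 : ℝ) 1, f x =
      (∫ x in Ioo (0 : ℝ) (1 / 2), f x) + ∫ x in Ioo (0 : ℝ) (1 / 2), f (1 - x) := by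
  have hleft : IntervalIntegrable f volume 0 (1 / 2) := by
    rw [intervalIntegrable_iff_integrableOn_Ioo_of_le (by norm_num)]
    exact hf.mono_set (Ioo_subset_Ioo_right (by norm_num))
  have hright : IntervalIntegrable f volume (1 / 2) 1 := by
    rw [intervalIntegrable_iff_integrableOn_Ioo_of_le (by norm_num)]
    exact hf.mono_set (Ioo_subset_Ioo_left (by norm_num))
  have hreflect := intervalIntegral.integral_comp_sub_left f (a := 0) (b := 1 / 2) 1
  rw [sub_zero, show (1 : ℝ) - 1 / 2 = 1 / 2 by norm_num] at hreflect
  simp only [← integral_Ioc_eq_integral_Ioo]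
  rw [← intervalIntegral.integral_of_le zero_le_one,
    ← intervalIntegral.integral_of_le (by norm_num),
    ← intervalIntegral.integral_of_le (by norm_num), hreflect,
    intervalIntegral.integral_add_adjacent_intervals hleft hright]

theorem setIntegral_beta_fold {a b : ℝ} (ha : 0 < a) (hb : 0 < b) :
    ∫ x in Ioo (0 : ℝ) (1 / 2), (x ^ (a - 1) * (1 - x) ^ (b - 1) +
      x ^ (b - 1) * (1 - x) ^ (a - 1)) = beta a b := by
  have hsub : Ioo (0 : ℝ) (1 / 2) ⊆ Ioo 0 1 := Ioo_subset_Ioo_right (by norm_num)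
  rw [integral_add ((integrableOn_beta ha hb).mono_set hsub)
    ((integrableOn_beta hb ha).mono_set hsub), ← setIntegral_beta ha hb,
    setIntegral_Ioo_one_eq_add_comp_one_sub (integrableOn_beta ha hb)]
  simp only [sub_sub_cancel, mul_comm]

theorem hasDerivAt_pow_div_one_add_pow (n : ℕ) {x : ℝ} (hx : 0 ≤ x) :
    HasDerivAt (fun x : ℝ => x ^ n / (1 + x ^ n)) (n * x ^ (n - 1) / (1 + x ^ n) ^ 2) x := by
  have hu : 0 < 1 + x ^ n := by positivity
  refine ((hasDerivAt_pow n x).div ((hasDerivAt_pow n x).const_add 1) hu.ne').congr_deriv ?_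
  congr 1
  ring

theorem injOn_pow_div_one_add_pow {n : ℕ} (hn : n ≠ 0) :
    InjOn (fun x : ℝ => x ^ n / (1 + x ^ n)) (Ici 0) := by
  intro x (hx : 0 ≤ x) y (hy : 0 ≤ y) h
  have h : x ^ n / (1 + x ^ n) = y ^ n / (1 + y ^ n) := h
  rw [div_eq_div_iff (by positivity) (by positivity)] at h
  exact (pow_left_inj₀ hx hy hn).1 (by linarith)

theorem image_pow_div_one_add_pow {n : ℕ} (hn : n ≠ 0) :
    (fun x : ℝ => x ^ n / (1 + x ^ n)) '' Ioo 0 1 = Set.Ioo 0 (1 / 2) := by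
  ext y
  constructor
  · rintro ⟨x, ⟨hx₀, hx₁⟩, rfl⟩
    have hxn : x ^ n < 1 := pow_lt_one₀ hx₀.le hx₁ hn
    refine ⟨by positivity, ?_⟩
    rw [div_lt_div_iff₀ (by positivity) (by norm_num)]
    linarith
  · rintro ⟨hy₀, hy₁⟩
    have hy : 0 < 1 - y := by linarith
    have hq₀ : 0 ≤ y / (1 - y) := by positivity
    have hq₁ : y / (1 - y) < 1 := by rw [div_lt_one hy]; linarith
    refine ⟨(y / (1 - y)) ^ (n⁻¹ : ℝ), ⟨by positivity, rpow_lt_one hq₀ hq₁ (by positivity)⟩, ?_⟩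
    simp only [rpow_inv_natCast_pow hq₀ hn]
    field_simp
    ring

theorem pow_div_one_add_pow_rpow_mul {n : ℕ} (hn : n ≠ 0) {x : ℝ} (hx : 0 < x) (a b : ℝ) :
    (x ^ n / (1 + x ^ n)) ^ (a - 1) * (1 - x ^ n / (1 + x ^ n)) ^ (b - 1) *
        (n * x ^ (n - 1) / (1 + x ^ n) ^ 2) =
      n * x ^ (n * a - 1) * (1 + x ^ n) ^ (-(a + b)) := by
  have hu : 0 < 1 + x ^ n := by positivity
  have hsub : 1 - x ^ n / (1 + x ^ n) = 1 / (1 + x ^ n) := by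
    field_simp
    ring
  have hxpow : x ^ (n * a - 1) = (x ^ n) ^ (a - 1) * x ^ (n - 1) := by
    rw [← rpow_natCast x n, ← rpow_mul hx.le, ← rpow_natCast x (n - 1), ← rpow_add hx,
      Nat.cast_pred (Nat.pos_of_ne_zero hn)]
    congr 1
    ring
  rw [hsub, hxpow]
  generalize 1 + x ^ n = u at hu
  have hupow : u ^ (a - 1) * u ^ (b - 1) * u ^ 2 * u ^ (-(a + b)) = 1 := by
    rw [← rpow_natCast u 2, ← rpow_add hu, ← rpow_add hu, ← rpow_add hu]
    convert rpow_zero u using 2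
    push_cast
    ring
  rw [div_rpow (by positivity) hu.le, div_rpow zero_le_one hu.le, one_rpow]
  field_simp
  linear_combination -hupow

theorem setIntegral_beta_pow {n : ℕ} (hn : n ≠ 0) {a b : ℝ} (ha : 0 < a) (hb : 0 < b) :
    ∫ x in Ioo (0 : ℝ) 1, n * (x ^ (n * a - 1) + x ^ (n * b - 1)) * (1 + x ^ n) ^ (-(a + b)) =
      beta a b := by
  rw [← setIntegral_beta_fold ha hb, ← image_pow_div_one_add_pow hn,
    integral_image_eq_integral_abs_deriv_smul measurableSet_Ioo
      (fun x hx => (hasDerivAt_pow_div_one_add_pow n hx.1.le).hasDerivWithinAt)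
      ((injOn_pow_div_one_add_pow hn).mono fun x hx => hx.1.le)]
  refine setIntegral_congr_fun measurableSet_Ioo fun x ⟨hx, _⟩ => ?_
  have hab := pow_div_one_add_pow_rpow_mul hn hx a b
  have hba := pow_div_one_add_pow_rpow_mul hn hx b a
  rw [add_comm b a] at hba
  simp only [smul_eq_mul]
  rw [abs_of_nonneg (by positivity)]
  linear_combination -hab - hba

theorem hasDerivAt_add_inv_div_sqrt_three {x : ℝ} (hx : x ≠ 0) :
    HasDerivAt (fun x : ℝ => (x + x⁻¹) / √3) (-((1 - x) * (1 + x) / (x ^ 2 * √3))) x := by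
  refine (((hasDerivAt_id x).add (hasDerivAt_inv hx)).div_const √3).congr_deriv ?_
  field_simp
  ring

theorem injOn_add_inv_div {c : ℝ} (hc : c ≠ 0) :
    InjOn (fun x : ℝ => (x + x⁻¹) / c) (Ioo 0 1) := by
  intro x ⟨hx₀, hx₁⟩ y ⟨hy₀, hy₁⟩ h
  have hxy : x * y < 1 := mul_lt_one_of_nonneg_of_lt_one_left hx₀.le hx₁ hy₁.le
  field_simp at h
  have hfactor : (x - y) * (1 - x * y) = 0 := by linear_combination -h
  rcases mul_eq_zero.1 hfactor with h | h <;> linarith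

theorem image_add_inv_div {c : ℝ} (hc : 0 < c) :
    (fun x : ℝ => (x + x⁻¹) / c) '' Ioo 0 1 = Set.Ioi (2 / c) := by
  ext y
  constructor
  · rintro ⟨x, ⟨hx₀, hx₁⟩, rfl⟩
    have hsq : x + x⁻¹ - 2 = (1 - x) ^ 2 / x := by
      field_simp
      ring
    have hx : 0 < (1 - x) ^ 2 / x := div_pos (pow_pos (sub_pos.2 hx₁) 2) hx₀
    exact div_lt_div_of_pos_right (by linarith) hc
  · intro hy
    have hz : 2 < c * y := by rwa [Set.mem_Ioi, div_lt_iff₀' hc] at hy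
    obtain ⟨z, rfl⟩ : ∃ z, y = z / c := ⟨c * y, by field_simp⟩
    rw [mul_div_cancel₀ _ hc.ne'] at hz
    have hz₄ : 0 < z ^ 2 - 4 := by nlinarith
    have hq : √(z ^ 2 - 4) ^ 2 = z ^ 2 - 4 := sq_sqrt hz₄.le
    have hq₀ := sqrt_pos.2 hz₄
    set q := √(z ^ 2 - 4)
    have hqz : q < z := by nlinarith
    have hzq : z - 2 < q := by nlinarith
    refine ⟨(z - q) / 2, ⟨by linarith, by linarith⟩, ?_⟩
    have hzq₀ : z - q ≠ 0 := by linarith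
    refine congrArg (· / c) ?_
    field_simp
    linear_combination hq

/-- Under `v = (x + x⁻¹)/√3` the cubic `v³ - v` becomes `(1 + x⁶)/(3√3 x³)`. -/
theorem rpow_mul_rpow_add_inv_div_sqrt_three (a : ℝ) {x : ℝ} (hx₀ : 0 < x) (hx₁ : x < 1) :
    (1 - x) * (1 + x) / (x ^ 2 * √3) * (((x + x⁻¹) / √3 - 2 / √3) ^ (-(1 / 2) : ℝ) *
        (((x + x⁻¹) / √3) ^ 3 - (x + x⁻¹) / √3) ^ (-(2 * a + 1 / 6))) =
      3 ^ (3 * a) * (x ^ (6 * a - 1) * (1 + x)) * (1 + x ^ 6) ^ (-(2 * a + 1 / 6)) := by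
  have hx : 0 < 1 - x := sub_pos.2 hx₁
  have hs₃ : √3 ^ 2 = 3 := sq_sqrt (by norm_num)
  have hlin : (x + x⁻¹) / √3 - 2 / √3 = (1 - x) ^ 2 / (x * √3) := by
    field_simp
    ring
  have hcubic : ((x + x⁻¹) / √3) ^ 3 - (x + x⁻¹) / √3 = (1 + x ^ 6) / (x * √3) ^ 3 := by
    field_simp
    linear_combination (-x ^ 4 - x ^ 2) * hs₃
  have hsqrt : ((1 - x) ^ 2 / (x * √3)) ^ (-(1 / 2) : ℝ) = (x * √3) ^ (1 / 2 : ℝ) / (1 - x) := by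
    rw [rpow_neg (by positivity), ← sqrt_eq_rpow, ← sqrt_eq_rpow, sqrt_div (by positivity),
      sqrt_sq hx.le, inv_div]
  have hpow : (x * √3) ^ (1 / 2 : ℝ) * ((x * √3) ^ 3) ^ (2 * a + 1 / 6) =
      3 ^ (3 * a) * x ^ (6 * a - 1) * (x ^ 2 * √3) := by
    have hexp : (1 / 2 : ℝ) + (3 : ℕ) * (2 * a + 1 / 6) = 6 * a + 1 := by
      push_cast
      ring
    rw [← rpow_natCast _ 3, ← rpow_mul (by positivity), ← rpow_add (by positivity), hexp,
      rpow_add_one (by positivity), mul_rpow hx₀.le (by positivity), rpow_sub_one hx₀.ne',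
      sqrt_eq_rpow 3, ← rpow_mul zero_le_three, show (1 / 2 : ℝ) * (6 * a) = 3 * a by ring]
    field_simp
  rw [hlin, hcubic, hsqrt, div_rpow (by positivity) (by positivity),
    rpow_neg (x := (x * √3) ^ 3) (by positivity), div_inv_eq_mul]
  calc _ = (x * √3) ^ (1 / 2 : ℝ) * ((x * √3) ^ 3) ^ (2 * a + 1 / 6) * (1 + x) *
        (1 + x ^ 6) ^ (-(2 * a + 1 / 6)) / (x ^ 2 * √3) := by
        generalize ((x * √3) ^ 3) ^ (2 * a + 1 / 6) = P
        generalize (1 + x ^ 6) ^ (-(2 * a + 1 / 6)) = U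
        field_simp
    _ = _ := by
        rw [hpow]
        field_simp

/-- The integral `∫ (v - 2/√3)^(-1/2) (v³ - v)^(-p) dv` over `v > 2/√3`. The end point is written
`2√3/3`, so that it is visibly a polynomial in `√3`. -/
noncomputable def cubicMoment (p : ℝ) : ℝ :=
  ∫ v in Ioi (2 * √3 / 3), (v - 2 * √3 / 3) ^ (-(1 / 2) : ℝ) * (v ^ 3 - v) ^ (-p)

theorem cubicMoment_eq_beta {a : ℝ} (ha : 0 < a) :
    cubicMoment (2 * a + 1 / 6) = 3 ^ (3 * a) / 6 * beta a (a + 1 / 6) := by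
  have h₃ : 0 < √3 := by positivity
  have hend : 2 * √3 / 3 = 2 / √3 := by
    rw [div_eq_div_iff (by norm_num) h₃.ne', mul_assoc, mul_self_sqrt zero_le_three]
  rw [cubicMoment, hend, ← image_add_inv_div h₃, integral_image_eq_integral_abs_deriv_smul
      measurableSet_Ioo (fun x hx => (hasDerivAt_add_inv_div_sqrt_three hx.1.ne').hasDerivWithinAt)
      (injOn_add_inv_div h₃.ne'),
    ← setIntegral_beta_pow (n := 6) (by norm_num) ha (by positivity : 0 < a + 1 / 6),
    ← integral_const_mul]
  refine setIntegral_congr_fun measurableSet_Ioo fun x ⟨hx₀, hx₁⟩ => ?_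
  have hshift : x ^ (6 * (a + 1 / 6) - 1) = x ^ (6 * a - 1) * x := by
    rw [← rpow_add_one hx₀.ne']
    ring_nf
  simp only [smul_eq_mul, Nat.cast_ofNat]
  rw [abs_neg, abs_of_pos (by positivity), rpow_mul_rpow_add_inv_div_sqrt_three a hx₀ hx₁, hshift,
    ← add_assoc, ← two_mul]
  ring

theorem cubicMoment_one_fourth :
    cubicMoment (1 / 4) = 3 ^ (1 / 8 : ℝ) / 6 * beta (1 / 24) (5 / 24) := by
  have h := cubicMoment_eq_beta (a := 1 / 24) (by norm_num)
  norm_num at h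
  exact h

theorem cubicMoment_three_fourths :
    cubicMoment (3 / 4) = 3 ^ (7 / 8 : ℝ) / 6 * beta (7 / 24) (11 / 24) := by
  have h := cubicMoment_eq_beta (a := 7 / 24) (by norm_num)
  norm_num at h
  exact h

theorem cubicMoment_one_fourth_pos : 0 < cubicMoment (1 / 4) := by
  rw [cubicMoment_one_fourth]
  exact mul_pos (by positivity) (beta_pos (by norm_num) (by norm_num))

theorem cubicMoment_three_fourths_pos : 0 < cubicMoment (3 / 4) := by
  rw [cubicMoment_three_fourths]
  exact mul_pos (by positivity) (beta_pos (by norm_num) (by norm_num))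

/-- The ratio of `cubicMoment (1 / 4)` to `cubicMoment (3 / 4)`. -/
noncomputable def cubicWeight : ℝ := √2 + 2 * √3 / 3

theorem cubicMoment_one_fourth_eq_mul :
    cubicMoment (1 / 4) = cubicWeight * cubicMoment (3 / 4) := by
  have hpow : (3 : ℝ) ^ (1 / 8 : ℝ) * 3 ^ (1 / 4 : ℝ) * √3 = 3 ^ (7 / 8 : ℝ) := by
    rw [sqrt_eq_rpow, ← rpow_add (by norm_num), ← rpow_add (by norm_num)]
    norm_num
  have hroot : cubicWeight * √3 = √2 * (√3 + √2) := by
    have h₂ : √2 ^ 2 = 2 := sq_sqrt (by norm_num)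
    have h₃ : √3 ^ 2 = 3 := sq_sqrt (by norm_num)
    rw [cubicWeight]
    linear_combination 2 / 3 * h₃ - h₂
  rw [cubicMoment_one_fourth, cubicMoment_three_fourths, beta_one_five_eq, ← hpow]
  linear_combination -(3 ^ (1 / 8 : ℝ) * 3 ^ (1 / 4 : ℝ) / 6 * beta (7 / 24) (11 / 24)) * hroot

theorem cubicMoment_one_fourth_mul_three_fourths :
    cubicMoment (1 / 4) * cubicMoment (3 / 4) =
      Gamma (1 / 24) * Gamma (5 / 24) * Gamma (7 / 24) * Gamma (11 / 24) / (12 * √2 * π) := by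
  have hpow : (3 : ℝ) ^ (1 / 8 : ℝ) * 3 ^ (7 / 8 : ℝ) = 3 := by
    rw [← rpow_add (by norm_num)]
    norm_num
  have hbeta := beta_mul_beta
  rw [cubicMoment_one_fourth, cubicMoment_three_fourths]
  calc _ = 3 ^ (1 / 8 : ℝ) * 3 ^ (7 / 8 : ℝ) / 36 *
        (beta (1 / 24) (5 / 24) * beta (7 / 24) (11 / 24)) := by ring
    _ = _ := by
      rw [hpow, hbeta]
      field_simp
      norm_num

theorem one_add_div_sqrt_div_sqrt_eq_rpow (c : ℝ) {y X : ℝ} (hy : 0 < y) (hX : 0 < X) :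
    (1 + c / √X) / √(y * √X) = y ^ (-(1 / 2) : ℝ) * X ^ (-(1 / 4) : ℝ) +
      c * (y ^ (-(1 / 2) : ℝ) * X ^ (-(3 / 4) : ℝ)) := by
  have hfourth : √√X = X ^ (1 / 4 : ℝ) := by
    rw [sqrt_eq_rpow, sqrt_eq_rpow, ← rpow_mul hX.le]
    norm_num
  have hthree : X ^ (3 / 4 : ℝ) = √X * X ^ (1 / 4 : ℝ) := by
    rw [sqrt_eq_rpow, ← rpow_add hX]
    norm_num
  rw [rpow_neg hy.le, rpow_neg hX.le, rpow_neg hX.le, ← sqrt_eq_rpow, sqrt_mul hy.le, hfourth,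
    hthree]
  field_simp

/-- The non-negative branch of `X` on the curve `X² = v³ - v`. -/
noncomputable def sqrtCubic (v : ℝ) : ℝ := √(v ^ 3 - v)

/-- The density of the differential `(1 + c/X) dv / √((v - 2/√3) X)`, where `X² = v³ - v`. -/
noncomputable def cubicForm (c v : ℝ) : ℝ :=
  (1 + c / sqrtCubic v) / √((v - 2 * √3 / 3) * sqrtCubic v)

theorem one_lt_two_mul_sqrt_three_div_three : 1 < 2 * √3 / 3 := by
  have h₃ : 3 / 2 < √3 := lt_sqrt_of_sq_lt (by norm_num)
  linarith

theorem pow_three_sub_self_pos {v : ℝ} (hv : 1 < v) : 0 < v ^ 3 - v := by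
  have hfactor : v ^ 3 - v = v * (v - 1) * (v + 1) := by ring
  rw [hfactor]
  positivity

theorem setIntegral_cubicForm (c : ℝ) :
    ∫ v in Ioi (2 * √3 / 3), cubicForm c v = cubicMoment (1 / 4) + c * cubicMoment (3 / 4) := by
  have hint {p : ℝ} (hp : 0 < cubicMoment p) : IntegrableOn (fun v : ℝ =>
      (v - 2 * √3 / 3) ^ (-(1 / 2) : ℝ) * (v ^ 3 - v) ^ (-p)) (Ioi (2 * √3 / 3)) :=
    .of_integral_ne_zero hp.ne'
  rw [cubicMoment, cubicMoment, ← integral_const_mul, ← integral_add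
    (hint cubicMoment_one_fourth_pos) ((hint cubicMoment_three_fourths_pos).const_mul c)]
  exact setIntegral_congr_fun measurableSet_Ioi fun v hv => one_add_div_sqrt_div_sqrt_eq_rpow c
    (sub_pos.2 hv) (pow_three_sub_self_pos (one_lt_two_mul_sqrt_three_div_three.trans hv))

theorem sq_setIntegral_cubicForm :
    (∫ v in Ioi (2 * √3 / 3), cubicForm cubicWeight v) ^ 2 = cubicWeight / (3 * √2 * π) *
      (Gamma (1 / 24) * Gamma (5 / 24) * Gamma (7 / 24) * Gamma (11 / 24)) := by
  rw [setIntegral_cubicForm]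
  calc _ = 4 * cubicWeight * (cubicMoment (1 / 4) * cubicMoment (3 / 4)) := by
        rw [cubicMoment_one_fourth_eq_mul]
        ring
    _ = _ := by
        rw [cubicMoment_one_fourth_mul_three_fourths]
        field_simp
        ring

end BetaIntegrals

section GeneratingFunction

theorem chooseSqSum_pow_nonneg {x : ℝ} (hx : 0 ≤ x) (n : ℕ) : 0 ≤ chooseSqSum (x ^ ·) n :=
  chooseSqSum_nonneg (fun k => pow_nonneg hx k) n

theorem chooseSqSum_pow_le {x r : ℝ} (hx : 0 ≤ x) (hr : 0 ≤ r) (hxr : x ≤ r ^ 2) (n : ℕ) :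
    chooseSqSum (x ^ ·) n ≤ ((1 + r) ^ 2) ^ n :=
  chooseSqSum_le hr (fun k => pow_le_pow_left₀ hx hxr k) n

theorem chooseSqSum_pow_cauchyBounded {x r : ℝ} (hx : 0 ≤ x) (hr : 0 ≤ r) (hxr : x ≤ r ^ 2) :
    CauchyBounded ((1 + r) ^ 2)⁻¹ (chooseSqSum (x ^ ·)) :=
  cauchyBounded_of_le_pow (by positivity) (chooseSqSum_pow_nonneg hx)
    (chooseSqSum_pow_le hx hr hxr)

variable {x w R : ℝ}

theorem chooseSqSum_pow_ode (hc : CauchyBounded R (chooseSqSum (x ^ ·))) (hw : |w| < R) :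
    (1 - 2 * (1 + x) * w + (1 - x) ^ 2 * w ^ 2) * powSum (eulerCoeff (chooseSqSum (x ^ ·))) w =
      ((1 + x) * w - (1 - x) ^ 2 * w ^ 2) * powSum (chooseSqSum (x ^ ·)) w := by
  have h₀ := hc.hasSum hw
  have h₁ := hc.euler.hasSum hw
  have hzero := add_mul_add_sq_mul_eq_zero_of_hasSum (w := w) h₁
    (((h₁.mul_left 2).add h₀).mul_left (-(1 + x))) ((h₁.add h₀).mul_left ((1 - x) ^ 2))
    (by simp [eulerCoeff]) (by simp [eulerCoeff, chooseSqSum_zero, chooseSqSum_one]; ring)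
    fun n => by
      have hrec := chooseSqSum_pow_recurrence x n
      simp only [eulerCoeff]
      push_cast
      linear_combination w ^ (n + 2) * hrec
  linear_combination hzero

theorem sq_powSum_chooseSqSum_pow (hc : CauchyBounded R (chooseSqSum (x ^ ·))) (hw₀ : 0 ≤ w)
    (hw : w < R) :
    powSum (chooseSqSum (x ^ ·)) w ^ 2 * (1 - 2 * (1 + x) * w + (1 - x) ^ 2 * w ^ 2) = 1 := by
  set G := powSum (chooseSqSum (x ^ ·))
  let F : ℝ → ℝ := fun y => G y ^ 2 * (1 - 2 * (1 + x) * y + (1 - x) ^ 2 * y ^ 2)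
  have habs {y : ℝ} (hy : y ∈ Set.Icc 0 w) : |y| < R :=
    (abs_of_nonneg hy.1).trans_lt (hy.2.trans_lt hw)
  have hcont : ContinuousOn F (Set.Icc 0 w) := by
    have hG : ContinuousOn G (Set.Icc 0 w) := fun y hy =>
      (hc.continuousAt (habs hy)).continuousWithinAt
    fun_prop
  have hderiv {y : ℝ} (hy : y ∈ Set.Ioo 0 w) : HasDerivAt F 0 y := by
    have hy₀ := hy.1.ne'
    have hyR := habs (Set.Ioo_subset_Icc_self hy)
    have hquad := (((hasDerivAt_id y).const_mul (2 * (1 + x))).const_sub 1).add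
      ((hasDerivAt_pow 2 y).const_mul ((1 - x) ^ 2))
    refine (((hc.hasDerivAt hy₀ hyR).pow 2).mul hquad).congr_deriv ?_
    have hode := chooseSqSum_pow_ode hc hyR
    simp only [Pi.pow_apply, Pi.add_apply, id, Nat.cast_ofNat]
    field_simp
    linear_combination 2 * G y * hode
  have hF₀ : F 0 = 1 := by simp [F, G, powSum_zero, chooseSqSum_zero]
  rcases hw₀.eq_or_lt with rfl | hw₀
  · exact hF₀
  obtain ⟨y, _, hslope⟩ := exists_hasDerivAt_eq_slope F (fun _ => 0) hw₀ hcont fun _ => hderiv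
  rw [eq_comm, div_eq_zero_iff, sub_eq_zero, hF₀] at hslope
  exact hslope.resolve_right (by simpa using hw₀.ne')

theorem powSum_chooseSqSum_pow (hc : CauchyBounded R (chooseSqSum (x ^ ·))) (hx : 0 ≤ x)
    (hw₀ : 0 ≤ w) (hw : w < R) :
    powSum (chooseSqSum (x ^ ·)) w = 1 / √(1 - 2 * (1 + x) * w + (1 - x) ^ 2 * w ^ 2) := by
  have hsq := sq_powSum_chooseSqSum_pow hc hw₀ hw
  have hG := powSum_nonneg (chooseSqSum_pow_nonneg hx) hw₀
  have hinv := sqrt_sq hG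
  rw [eq_one_div_of_mul_eq_one_left hsq, sqrt_div zero_le_one, sqrt_one] at hinv
  exact hinv.symm

theorem integral_four_mul_sin_sq_pow (k : ℕ) :
    ∫ t in (0 : ℝ)..π, (4 * sin t ^ 2) ^ k = π * (k.centralBinom : ℝ) := by
  have hprod (k : ℕ) : (4 : ℝ) ^ k * ∏ i ∈ range k, (2 * (i : ℝ) + 1) / (2 * i + 2) =
      k.centralBinom := by
    induction k with
    | zero => simp
    | succ k ih =>
      have hfactor : (4 : ℝ) * ((2 * (k : ℝ) + 1) / (2 * k + 2)) =
          2 * (2 * k + 1) / (k + 1) := by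
        field_simp
        ring
      rw [prod_range_succ, pow_succ, mul_mul_mul_comm, ih, hfactor, mul_div_assoc',
        div_eq_iff (by positivity)]
      linear_combination -cast_succ_mul_centralBinom_succ k
  simp only [mul_pow, ← pow_mul]
  rw [intervalIntegral.integral_const_mul, integral_sin_pow_even, ← hprod]
  ring

theorem integral_chooseSqSum_four_mul_sin_sq (n : ℕ) :
    ∫ t in (0 : ℝ)..π, chooseSqSum ((4 * sin t ^ 2) ^ ·) n = π * honeycomb n := by
  simp only [honeycomb, chooseSqSum, mul_sum]
  rw [intervalIntegral.integral_finsetSum fun k _ =>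
    Continuous.intervalIntegrable (by fun_prop) _ _]
  refine sum_congr rfl fun k _ => ?_
  rw [intervalIntegral.integral_const_mul, integral_four_mul_sin_sq_pow]
  ring

theorem integral_powSum_chooseSqSum_four_mul_sin_sq (hw₀ : 0 ≤ w) (hw : w < 1 / 9) :
    ∫ t in (0 : ℝ)..π, powSum (chooseSqSum ((4 * sin t ^ 2) ^ ·)) w = π * powSum honeycomb w := by
  have habs : |w| < 1 / 9 := (abs_of_nonneg hw₀).trans_lt hw
  have hx (t : ℝ) : 0 ≤ 4 * sin t ^ 2 := by positivity
  have hx₄ (t : ℝ) : 4 * sin t ^ 2 ≤ 2 ^ 2 := by linarith [sin_sq_le_one t]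
  have hsum : HasSum (fun n => ∫ t in (0 : ℝ)..π, chooseSqSum ((4 * sin t ^ 2) ^ ·) n * w ^ n)
      (∫ t in (0 : ℝ)..π, powSum (chooseSqSum ((4 * sin t ^ 2) ^ ·)) w) := by
    refine intervalIntegral.hasSum_integral_of_dominated_convergence
      (fun n _ => (9 * w) ^ n) (fun n => ?_) (fun n => .of_forall fun t _ => ?_)
      (.of_forall fun t _ => summable_geometric_of_lt_one (by positivity) (by linarith))
      (continuous_const.intervalIntegrable _ _) (.of_forall fun t _ => ?_)
    · refine Continuous.aestronglyMeasurable ?_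
      simp only [chooseSqSum]
      fun_prop
    · have hle := chooseSqSum_pow_le (hx t) zero_le_two (hx₄ t) n
      norm_num at hle
      rw [norm_of_nonneg (mul_nonneg (chooseSqSum_pow_nonneg (hx t) n) (pow_nonneg hw₀ n)),
        mul_pow]
      exact mul_le_mul_of_nonneg_right hle (pow_nonneg hw₀ n)
    · exact (chooseSqSum_pow_cauchyBounded (hx t) zero_le_two (hx₄ t)).hasSum (by norm_num [habs])
  refine hsum.unique (((honeycomb_cauchyBounded.hasSum habs).mul_left π).congr_fun fun n => ?_)
  rw [intervalIntegral.integral_mul_const, integral_chooseSqSum_four_mul_sin_sq, mul_assoc]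

open MeasureTheory in
theorem powSum_honeycomb_eq_setIntegral (hw₀ : 0 ≤ w) (hw : w < 1 / 9) :
    π * powSum honeycomb w = ∫ t in Set.Ioo (-(π / 2)) (π / 2),
      1 / √(1 - 2 * (1 + 4 * sin t ^ 2) * w + (1 - 4 * sin t ^ 2) ^ 2 * w ^ 2) := by
  have hperiodic : Function.Periodic (fun t : ℝ =>
      1 / √(1 - 2 * (1 + 4 * sin t ^ 2) * w + (1 - 4 * sin t ^ 2) ^ 2 * w ^ 2)) π := fun t => by
    simp only [sin_add_pi, neg_sq]
  have hshift := hperiodic.intervalIntegral_add_eq 0 (-(π / 2))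
  rw [zero_add, show -(π / 2) + π = π / 2 by ring] at hshift
  rw [← integral_powSum_chooseSqSum_four_mul_sin_sq hw₀ hw, ← integral_Ioc_eq_integral_Ioo,
    ← intervalIntegral.integral_of_le (by linarith [pi_pos]), ← hshift]
  refine intervalIntegral.integral_congr fun t _ => ?_
  have hx₀ : 0 ≤ 4 * sin t ^ 2 := by positivity
  have hx₄ : 4 * sin t ^ 2 ≤ 2 ^ 2 := by linarith [sin_sq_le_one t]
  exact powSum_chooseSqSum_pow (chooseSqSum_pow_cauchyBounded hx₀ zero_le_two hx₄) hx₀ hw₀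
    (by norm_num [hw])

end GeneratingFunction

section EllipticSubstitution

theorem sqrtCubic_pos {v : ℝ} (hv : 1 < v) : 0 < sqrtCubic v :=
  sqrt_pos.2 (pow_three_sub_self_pos hv)

theorem sq_sqrtCubic {v : ℝ} (hv : 1 < v) : sqrtCubic v ^ 2 = v ^ 3 - v :=
  sq_sqrt (pow_three_sub_self_pos hv).le

theorem cubicWeight_pos : 0 < cubicWeight := by
  unfold cubicWeight
  positivity

theorem cubicForm_pos {c v : ℝ} (hc : 0 ≤ c) (hv : 2 * √3 / 3 < v) : 0 < cubicForm c v := by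
  have hX := sqrtCubic_pos (one_lt_two_mul_sqrt_three_div_three.trans hv)
  unfold cubicForm
  positivity

theorem sq_cubicForm {c v : ℝ} (hv : 2 * √3 / 3 < v) :
    cubicForm c v ^ 2 * ((v - 2 * √3 / 3) * sqrtCubic v ^ 3) = (sqrtCubic v + c) ^ 2 := by
  have hX := sqrtCubic_pos (one_lt_two_mul_sqrt_three_div_three.trans hv)
  have hw : 0 < v - 2 * √3 / 3 := sub_pos.2 hv
  rw [cubicForm, div_pow, sq_sqrt (by positivity)]
  generalize v - 2 * √3 / 3 = w at *
  field_simp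

/-- The quartic in `t = tan ψ` to which the kernel of `powSum_honeycomb_eq_setIntegral` at
`criticalArg` reduces. -/
noncomputable def criticalQuartic (t : ℝ) : ℝ :=
  (17 + 12 * √2) / 2 + (12 + 9 * √2) * t ^ 2 + (9 + 6 * √2) / 2 * t ^ 4

theorem criticalQuartic_pos (t : ℝ) : 0 < criticalQuartic t := by
  unfold criticalQuartic
  positivity

/-- The factor by which `tanParam` stretches the elliptic differential, squared. -/
noncomputable def paramConst : ℝ := (8 - 6 * √2 + 6 * √3 - 4 * (√2 * √3)) / 16

/-- A quadratic factor of the numerator of `tanParam`. -/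
noncomputable def paramNumer (v : ℝ) : ℝ :=
  v ^ 2 - (8 + 5 * √2 - 3 * √3 - 3 * (√2 * √3)) * v + (-4 - 2 * √2 + 2 * √3 + 2 * (√2 * √3))

/-- The slope of the line through the origin in the denominator of `tanParam`. -/
noncomputable def paramSlope (v : ℝ) : ℝ := -(√2 / 2 + √3) + (1 + √2 * √3 / 2) * v

/-- The denominator of `tanParam`. -/
noncomputable def paramDenom (v : ℝ) : ℝ := sqrtCubic v + v * paramSlope v

/-- The square of `paramDenom`, divided by `v`. -/
noncomputable def paramNorm (v : ℝ) : ℝ :=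
  v ^ 2 - 1 + v * paramSlope v ^ 2 + 2 * sqrtCubic v * paramSlope v

/-- The factor of `tanParam ^ 2` which is not a square in the function field of `X² = v³ - v`. -/
noncomputable def paramRadicand (v : ℝ) : ℝ :=
  (9 * √3 + 11 * √2) / 6 * sqrtCubic v * v / ((v - 1) * (v - 2 * √3 / 3))

/-- The logarithmic derivative of `paramRadicand`. -/
noncomputable def paramLogDeriv (v : ℝ) : ℝ :=
  (3 * v ^ 2 - 1) / (2 * sqrtCubic v) / sqrtCubic v + 1 / v - 1 / (v - 1) - 1 / (v - 2 * √3 / 3)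

/-- The cofactor of `X + cubicWeight` in the numerator of the derivative of `tanParam`. -/
noncomputable def paramCofactor (v : ℝ) : ℝ :=
  ((40 + 40 * √2 - 32 * √3 - 16 * (√2 * √3)) * v +
    (60 + 38 * √2 - 34 * √3 - 26 * (√2 * √3)) * v ^ 2 +
    (33 + 15 * √2 - 10 * √3 - 9 * (√2 * √3)) * v ^ 3 +
    (6 + 3 * √2 - 8 * √3 - 3 * (√2 * √3)) * v ^ 4 + 3 * v ^ 5) +
  ((20 + 10 * √2 - 8 * √3 - 8 * (√2 * √3)) + (-18 - 5 * √2 + 2 * √3 + 7 * (√2 * √3)) * v +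
    (-10 - 13 * √2 + 11 * √3 + 15 / 2 * (√2 * √3)) * v ^ 2 +
    (-5 - 4 * √2 - √3 + 2 * (√2 * √3)) * v ^ 3 + (1 + √2 * √3 / 2) * v ^ 4) * sqrtCubic v

/-- The substitution `t = tanParam v`, carrying the half-line `v > 2/√3` onto the real line and
`dt / √(criticalQuartic t)` to a multiple of `cubicForm cubicWeight v dv`. -/
noncomputable def tanParam (v : ℝ) : ℝ := √(paramRadicand v) * paramNumer v / paramDenom v

theorem sqrt_two_bounds : 1.41421 < √2 ∧ √2 < 1.41422 :=
  ⟨lt_sqrt_of_sq_lt (by norm_num), (sqrt_lt' (by norm_num)).2 (by norm_num)⟩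

theorem sqrt_three_bounds : 1.73205 < √3 ∧ √3 < 1.73206 :=
  ⟨lt_sqrt_of_sq_lt (by norm_num), (sqrt_lt' (by norm_num)).2 (by norm_num)⟩

theorem sqrt_two_mul_sqrt_three_bounds : 2.44948 < √2 * √3 ∧ √2 * √3 < 2.4495 := by
  rw [← sqrt_mul zero_le_two]
  exact ⟨lt_sqrt_of_sq_lt (by norm_num), (sqrt_lt' (by norm_num)).2 (by norm_num)⟩

theorem paramConst_pos : 0 < paramConst := by
  have h₂ := sqrt_two_bounds
  have h₃ := sqrt_three_bounds
  have h₆ := sqrt_two_mul_sqrt_three_bounds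
  unfold paramConst
  linarith

theorem paramSlope_pos {v : ℝ} (hv : 2 * √3 / 3 ≤ v) : 0 < paramSlope v := by
  have h₂ := sqrt_two_bounds
  have h₃ := sqrt_three_bounds
  have h₆ := sqrt_two_mul_sqrt_three_bounds
  unfold paramSlope
  nlinarith

theorem paramNumer_two_mul_sqrt_three_div_three_neg : paramNumer (2 * √3 / 3) < 0 := by
  have h₂ := sqrt_two_bounds
  have h₃ := sqrt_three_bounds
  have h₆ := sqrt_two_mul_sqrt_three_bounds
  have hsq : √3 ^ 2 = 3 := sq_sqrt zero_le_three
  have hvalue : paramNumer (2 * √3 / 3) =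
      10 / 3 + 4 * √2 - 10 * √3 / 3 - 4 * (√2 * √3) / 3 := by
    unfold paramNumer
    linear_combination (22 / 9 + 2 * √2) * hsq
  rw [hvalue]
  linarith

theorem paramDenom_pos {v : ℝ} (hv : 2 * √3 / 3 ≤ v) : 0 < paramDenom v := by
  have h₁ := one_lt_two_mul_sqrt_three_div_three.trans_le hv
  have hX := sqrtCubic_pos h₁
  have hM := paramSlope_pos hv
  unfold paramDenom
  positivity

theorem sq_paramDenom {v : ℝ} (hv : 1 < v) : paramDenom v ^ 2 = v * paramNorm v := by
  unfold paramDenom paramNorm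
  linear_combination sq_sqrtCubic hv

theorem paramNorm_pos {v : ℝ} (hv : 2 * √3 / 3 < v) : 0 < paramNorm v := by
  have h₁ := one_lt_two_mul_sqrt_three_div_three.trans hv
  have hsq : 0 < v * paramNorm v := by
    rw [← sq_paramDenom h₁]
    exact pow_pos (paramDenom_pos hv.le) 2
  exact pos_of_mul_pos_right hsq (by linarith)

theorem paramRadicand_pos {v : ℝ} (hv : 2 * √3 / 3 < v) : 0 < paramRadicand v := by
  have h₁ := one_lt_two_mul_sqrt_three_div_three.trans hv
  have hX := sqrtCubic_pos h₁
  unfold paramRadicand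
  positivity

end EllipticSubstitution

section SubstitutionDerivative

theorem hasDerivAt_sqrtCubic {v : ℝ} (hv : 1 < v) :
    HasDerivAt sqrtCubic ((3 * v ^ 2 - 1) / (2 * sqrtCubic v)) v := by
  have h := ((hasDerivAt_pow 3 v).sub (hasDerivAt_id v)).sqrt (pow_three_sub_self_pos hv).ne'
  refine h.congr_deriv ?_
  norm_num [sqrtCubic]

theorem hasDerivAt_paramNumer (v : ℝ) :
    HasDerivAt paramNumer (2 * v - (8 + 5 * √2 - 3 * √3 - 3 * (√2 * √3))) v := by
  have h := ((hasDerivAt_pow 2 v).sub ((hasDerivAt_id v).const_mul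
    (8 + 5 * √2 - 3 * √3 - 3 * (√2 * √3)))).add_const (-4 - 2 * √2 + 2 * √3 + 2 * (√2 * √3))
  exact h.congr_deriv (by simp)

theorem hasDerivAt_paramSlope (v : ℝ) : HasDerivAt paramSlope (1 + √2 * √3 / 2) v := by
  have h := ((hasDerivAt_id v).const_mul (1 + √2 * √3 / 2)).const_add (-(√2 / 2 + √3))
  exact h.congr_deriv (by simp)

theorem hasDerivAt_paramDenom {v : ℝ} (hv : 1 < v) :
    HasDerivAt paramDenom ((3 * v ^ 2 - 1) / (2 * sqrtCubic v) +
      (paramSlope v + v * (1 + √2 * √3 / 2))) v := by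
  have h := (hasDerivAt_sqrtCubic hv).add ((hasDerivAt_id v).mul (hasDerivAt_paramSlope v))
  exact h.congr_deriv (by simp)

theorem hasDerivAt_paramRadicand {v : ℝ} (hv : 2 * √3 / 3 < v) :
    HasDerivAt paramRadicand (paramRadicand v * paramLogDeriv v) v := by
  have h₁ := one_lt_two_mul_sqrt_three_div_three.trans hv
  have hX := sqrtCubic_pos h₁
  have hv₁ : 0 < v - 1 := sub_pos.2 h₁
  have hw : 0 < v - 2 * √3 / 3 := sub_pos.2 hv
  have h := (((hasDerivAt_sqrtCubic h₁).const_mul ((9 * √3 + 11 * √2) / 6)).mul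
    (hasDerivAt_id v)).div (((hasDerivAt_id v).sub_const 1).mul
      ((hasDerivAt_id v).sub_const (2 * √3 / 3))) (mul_pos hv₁ hw).ne'
  refine h.congr_deriv ?_
  simp only [id, Pi.mul_apply, paramRadicand, paramLogDeriv]
  generalize sqrtCubic v = X at *
  generalize 2 * √3 / 3 = w at *
  field_simp
  ring

theorem mul_paramLogDeriv {v : ℝ} (hv : 2 * √3 / 3 < v) :
    2 * sqrtCubic v ^ 2 * (v - 2 * √3 / 3) * paramLogDeriv v =
      (v - 2 * √3 / 3) * (3 * v ^ 2 - 2 * v - 3) - 2 * sqrtCubic v ^ 2 := by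
  have h₁ := one_lt_two_mul_sqrt_three_div_three.trans hv
  have hX := sqrtCubic_pos h₁
  have hX₂ := sq_sqrtCubic h₁
  have hw : 0 < v - 2 * √3 / 3 := sub_pos.2 hv
  rw [paramLogDeriv]
  generalize sqrtCubic v = X at *
  generalize 2 * √3 / 3 = w at *
  have hcubic : X ^ 2 * ((3 * v ^ 2 - 1) / (2 * X) / X) = (3 * v ^ 2 - 1) / 2 := by field_simp
  have hzero : X ^ 2 * (1 / v) = v ^ 2 - 1 := by rw [hX₂]; field_simp
  have hone : X ^ 2 * (1 / (v - 1)) = v * (v + 1) := by rw [hX₂]; field_simp; ring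
  have hend : (v - w) * (1 / (v - w)) = 1 := by field_simp
  linear_combination 2 * (v - w) * (hcubic + hzero - hone) - 2 * X ^ 2 * hend

set_option maxHeartbeats 4000000 in
-- a polynomial identity with several hundred monomials
theorem add_cubicWeight_mul_paramCofactor {v : ℝ} (hv : 1 < v) :
    (sqrtCubic v + cubicWeight) * paramCofactor v =
      ((v - 2 * √3 / 3) * (3 * v ^ 2 - 2 * v - 3) - 2 * sqrtCubic v ^ 2) *
          paramNumer v * paramDenom v +
        4 * sqrtCubic v ^ 2 * (v - 2 * √3 / 3) *
          ((2 * v - (8 + 5 * √2 - 3 * √3 - 3 * (√2 * √3))) * paramDenom v -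
            paramNumer v * (paramSlope v + v * (1 + √2 * √3 / 2))) -
        2 * sqrtCubic v * (v - 2 * √3 / 3) * paramNumer v * (3 * v ^ 2 - 1) := by
  have hX₂ := sq_sqrtCubic hv
  have ha₂ : √2 ^ 2 = 2 := sq_sqrt zero_le_two
  have hb₂ : √3 ^ 2 = 3 := sq_sqrt zero_le_three
  simp only [paramNumer, paramDenom, paramSlope, paramCofactor, cubicWeight]
  generalize sqrtCubic v = X at *
  generalize √2 = a at *
  generalize √3 = b at *
  have hb₃ : b ^ 3 = 3 * b := by rw [pow_succ, hb₂]
  have hX₃ : X ^ 3 = (v ^ 3 - v) * X := by rw [pow_succ, hX₂]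
  ring_nf
  simp only [ha₂, hb₂, hb₃, hX₂, hX₃]
  ring

theorem hasDerivAt_tanParam {v : ℝ} (hv : 2 * √3 / 3 < v) :
    HasDerivAt tanParam
      (√(paramRadicand v) * ((sqrtCubic v + cubicWeight) * paramCofactor v) /
        (4 * sqrtCubic v ^ 2 * (v - 2 * √3 / 3) * paramDenom v ^ 2)) v := by
  have h₁ := one_lt_two_mul_sqrt_three_div_three.trans hv
  have hX := sqrtCubic_pos h₁
  have hd := paramDenom_pos hv.le
  have hR := paramRadicand_pos hv
  have hw : 0 < v - 2 * √3 / 3 := sub_pos.2 hv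
  have h := (((hasDerivAt_paramRadicand hv).sqrt hR.ne').mul (hasDerivAt_paramNumer v)).div
    (hasDerivAt_paramDenom h₁) hd.ne'
  refine h.congr_deriv ?_
  rw [add_cubicWeight_mul_paramCofactor h₁, ← mul_paramLogDeriv hv]
  have hsqrt : paramRadicand v / √(paramRadicand v) = √(paramRadicand v) := div_sqrt
  rw [Pi.mul_apply, mul_comm 2 √(paramRadicand v), mul_div_mul_comm, hsqrt]
  generalize √(paramRadicand v) = S
  generalize sqrtCubic v = X at *
  generalize v - 2 * √3 / 3 = w at *
  field_simp
  ring

end SubstitutionDerivative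

section EllipticDifferential

theorem sq_tanParam {v : ℝ} (hv : 2 * √3 / 3 < v) :
    tanParam v ^ 2 = (9 * √3 + 11 * √2) / 6 * sqrtCubic v * paramNumer v ^ 2 /
      ((v - 1) * (v - 2 * √3 / 3) * paramNorm v) := by
  have h₁ := one_lt_two_mul_sqrt_three_div_three.trans hv
  have hw : 0 < v - 2 * √3 / 3 := sub_pos.2 hv
  have hN := paramNorm_pos hv
  rw [tanParam, div_pow, mul_pow, sq_paramDenom h₁, sq_sqrt (paramRadicand_pos hv).le,
    paramRadicand]
  generalize v - 2 * √3 / 3 = w at *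
  field_simp

set_option maxRecDepth 1000000 in
set_option maxHeartbeats 4000000 in
-- a polynomial identity with several hundred monomials
theorem mul_sq_paramCofactor {v : ℝ} (hv : 1 < v) :
    (9 * √3 + 11 * √2) / 6 * paramCofactor v ^ 2 =
      16 * paramConst * v *
        ((17 + 12 * √2) / 2 * (v - 1) * (v - 2 * √3 / 3) ^ 2 * paramNorm v ^ 2 +
          (12 + 9 * √2) * (v - 2 * √3 / 3) * ((9 * √3 + 11 * √2) / 6) * paramNumer v ^ 2 *
            sqrtCubic v * paramNorm v +
          (9 + 6 * √2) / 2 * ((9 * √3 + 11 * √2) / 6) ^ 2 * paramNumer v ^ 4 * v * (v + 1)) := by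
  have hX₂ := sq_sqrtCubic hv
  have ha₂ : √2 ^ 2 = 2 := sq_sqrt zero_le_two
  have hb₂ : √3 ^ 2 = 3 := sq_sqrt zero_le_three
  simp only [paramNumer, paramSlope, paramCofactor, paramNorm, paramConst]
  generalize sqrtCubic v = X at *
  generalize √2 = a at *
  generalize √3 = b at *
  have ha₃ : a ^ 3 = 2 * a := by rw [pow_succ, ha₂]
  have ha₄ : a ^ 4 = 4 := by linear_combination (a ^ 2 + 2) * ha₂
  have ha₅ : a ^ 5 = 4 * a := by rw [pow_succ, ha₄]
  have ha₆ : a ^ 6 = 8 := by linear_combination a ^ 2 * ha₄ + 4 * ha₂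
  have ha₇ : a ^ 7 = 8 * a := by rw [pow_succ, ha₆]
  have ha₈ : a ^ 8 = 16 := by linear_combination (a ^ 4 + 4) * ha₄
  have hb₃ : b ^ 3 = 3 * b := by rw [pow_succ, hb₂]
  have hb₄ : b ^ 4 = 9 := by linear_combination (b ^ 2 + 3) * hb₂
  have hb₅ : b ^ 5 = 9 * b := by rw [pow_succ, hb₄]
  have hb₆ : b ^ 6 = 27 := by linear_combination b ^ 2 * hb₄ + 9 * hb₂
  have hb₇ : b ^ 7 = 27 * b := by rw [pow_succ, hb₆]
  ring_nf
  simp only [ha₂, ha₃, ha₄, ha₅, ha₆, ha₇, ha₈, hb₂, hb₃, hb₄, hb₅, hb₆, hb₇, hX₂]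
  ring

theorem criticalQuartic_tanParam {v : ℝ} (hv : 2 * √3 / 3 < v) :
    16 * paramConst * criticalQuartic (tanParam v) *
        (v * (v - 1) * (v - 2 * √3 / 3) ^ 2 * paramNorm v ^ 2) =
      (9 * √3 + 11 * √2) / 6 * paramCofactor v ^ 2 := by
  have h₁ := one_lt_two_mul_sqrt_three_div_three.trans hv
  have hX₂ := sq_sqrtCubic h₁
  have hw : 0 < v - 2 * √3 / 3 := sub_pos.2 hv
  have hN := paramNorm_pos hv
  have hquartic : tanParam v ^ 4 = (tanParam v ^ 2) ^ 2 := by ring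
  rw [mul_sq_paramCofactor h₁, criticalQuartic, hquartic, sq_tanParam hv]
  generalize (9 * √3 + 11 * √2) / 6 = C
  generalize (17 + 12 * √2) / 2 = γ₀
  generalize 12 + 9 * √2 = γ₁
  generalize (9 + 6 * √2) / 2 = γ₂
  generalize v - 2 * √3 / 3 = w at *
  field_simp
  rw [hX₂]
  ring

theorem sq_deriv_tanParam {v : ℝ} (hv : 2 * √3 / 3 < v) :
    deriv tanParam v ^ 2 =
      paramConst * cubicForm cubicWeight v ^ 2 * criticalQuartic (tanParam v) := by
  have h₁ := one_lt_two_mul_sqrt_three_div_three.trans hv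
  have hX := sqrtCubic_pos h₁
  have hw : 0 < v - 2 * √3 / 3 := sub_pos.2 hv
  have hN := paramNorm_pos hv
  have hform := sq_cubicForm (c := cubicWeight) hv
  have hquartic := criticalQuartic_tanParam hv
  rw [(hasDerivAt_tanParam hv).deriv, div_pow, mul_pow, sq_sqrt (paramRadicand_pos hv).le,
    mul_pow _ (_ ^ 2) 2, sq_paramDenom h₁, mul_pow, ← hform, paramRadicand]
  generalize (9 * √3 + 11 * √2) / 6 = C at *
  generalize v - 2 * √3 / 3 = w at *
  generalize criticalQuartic (tanParam v) = Q at *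
  field_simp
  linear_combination -(cubicForm cubicWeight v ^ 2) * hquartic

theorem deriv_tanParam_ne_zero {v : ℝ} (hv : 2 * √3 / 3 < v) : deriv tanParam v ≠ 0 := by
  have hsq : 0 < deriv tanParam v ^ 2 := by
    rw [sq_deriv_tanParam hv]
    exact mul_pos (mul_pos paramConst_pos (pow_pos (cubicForm_pos cubicWeight_pos.le hv) 2))
      (criticalQuartic_pos _)
  exact sq_pos_iff.1 hsq

theorem abs_deriv_tanParam {v : ℝ} (hv : 2 * √3 / 3 < v) :
    |deriv tanParam v| =
      √paramConst * cubicForm cubicWeight v * √(criticalQuartic (tanParam v)) := by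
  rw [← sqrt_sq_eq_abs, sq_deriv_tanParam hv, sqrt_mul' _ (criticalQuartic_pos _).le,
    sqrt_mul paramConst_pos.le, sqrt_sq (cubicForm_pos cubicWeight_pos.le hv).le]

end EllipticDifferential

section SubstitutionRange

theorem continuousOn_tanParam : ContinuousOn tanParam (Set.Ioi (2 * √3 / 3)) :=
  fun _ hv => (hasDerivAt_tanParam hv).continuousAt.continuousWithinAt

theorem injOn_tanParam : Set.InjOn tanParam (Set.Ioi (2 * √3 / 3)) := by
  have hne : ∀ x ∈ Set.Ioi (2 * √3 / 3), ∀ y, x < y → tanParam x ≠ tanParam y := by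
    intro x hx y hxy h
    obtain ⟨z, hz, hz₀⟩ := exists_deriv_eq_zero hxy
      (continuousOn_tanParam.mono fun t ht => lt_of_lt_of_le hx ht.1) h
    exact deriv_tanParam_ne_zero (lt_trans hx hz.1) hz₀
  intro x hx y hy h
  rcases lt_trichotomy x y with hxy | hxy | hxy
  · exact absurd h (hne x hx y hxy)
  · exact hxy
  · exact absurd h.symm (hne y hy x hxy)

open Filter Topology

theorem tendsto_paramRadicand_nhdsGT : Tendsto paramRadicand (𝓝[>] (2 * √3 / 3)) atTop := by
  have h₁ := one_lt_two_mul_sqrt_three_div_three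
  have hX := sqrtCubic_pos h₁
  have hinv : Tendsto (fun v => (v - 2 * √3 / 3)⁻¹) (𝓝[>] (2 * √3 / 3)) atTop := by
    refine tendsto_inv_nhdsGT_zero.comp (tendsto_nhdsWithin_iff.2 ⟨?_, ?_⟩)
    · have hsub : ContinuousAt (fun v => v - 2 * √3 / 3) (2 * √3 / 3) := by fun_prop
      simpa using hsub.tendsto.mono_left nhdsWithin_le_nhds
    · filter_upwards [self_mem_nhdsWithin] with v hv
      simpa using hv
  have hv₁ : 0 < 2 * √3 / 3 - 1 := sub_pos.2 h₁
  have hcont : ContinuousAt (fun v => (9 * √3 + 11 * √2) / 6 * sqrtCubic v * v / (v - 1))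
      (2 * √3 / 3) :=
    ((continuousAt_const.mul (hasDerivAt_sqrtCubic h₁).continuousAt).mul continuousAt_id).div
      (by fun_prop) hv₁.ne'
  refine ((hcont.tendsto.mono_left nhdsWithin_le_nhds).pos_mul_atTop (by positivity) hinv).congr
    fun v => ?_
  rw [← div_eq_mul_inv, div_div, paramRadicand]

theorem tendsto_tanParam_nhdsGT : Tendsto tanParam (𝓝[>] (2 * √3 / 3)) atBot := by
  have hd := paramDenom_pos le_rfl
  have hcont : ContinuousAt (fun v => paramNumer v / paramDenom v) (2 * √3 / 3) :=
    (hasDerivAt_paramNumer _).continuousAt.div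
      (hasDerivAt_paramDenom one_lt_two_mul_sqrt_three_div_three).continuousAt hd.ne'
  refine ((tendsto_sqrt_atTop.comp tendsto_paramRadicand_nhdsGT).atTop_mul_neg
    (div_neg_of_neg_of_pos paramNumer_two_mul_sqrt_three_div_three_neg hd)
    (hcont.tendsto.mono_left nhdsWithin_le_nhds)).congr fun v => ?_
  exact (mul_div_assoc _ _ _).symm

theorem sqrt_sub_one_le_paramRadicand {v : ℝ} (hv : 2 * √3 / 3 < v) :
    √(v - 1) ≤ paramRadicand v := by
  have h₁ := one_lt_two_mul_sqrt_three_div_three.trans hv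
  have h₂ := sqrt_two_bounds
  have h₃ := sqrt_three_bounds
  have hv₁ : 0 < v - 1 := sub_pos.2 h₁
  have hX : √(v - 1) * v ≤ sqrtCubic v := by
    refine le_sqrt_of_sq_le ?_
    rw [mul_pow, sq_sqrt hv₁.le]
    nlinarith
  rw [paramRadicand, le_div_iff₀ (by positivity)]
  calc √(v - 1) * ((v - 1) * (v - 2 * √3 / 3)) ≤ √(v - 1) * (v * v) := by
        gcongr <;> linarith
    _ = 1 * (√(v - 1) * v) * v := by ring
    _ ≤ (9 * √3 + 11 * √2) / 6 * sqrtCubic v * v := by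
        gcongr
        linarith

theorem one_eighth_le_paramNumer_div_paramDenom {v : ℝ} (hv : 6 ≤ v) :
    1 / 8 ≤ paramNumer v / paramDenom v := by
  have h₂ := sqrt_two_bounds
  have h₃ := sqrt_three_bounds
  have h₆ := sqrt_two_mul_sqrt_three_bounds
  have hX : sqrtCubic v ≤ v ^ 2 := by
    refine sqrt_le_iff.2 ⟨by positivity, ?_⟩
    nlinarith [pow_pos (show 0 < v by linarith) 3]
  have hM : paramSlope v ≤ 3 * v := by
    unfold paramSlope
    nlinarith
  rw [le_div_iff₀ (paramDenom_pos (by linarith)), paramNumer, paramDenom]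
  nlinarith

theorem tendsto_tanParam_atTop : Tendsto tanParam atTop atTop := by
  have h₃ := sqrt_three_bounds
  have hlower : Tendsto (fun v : ℝ => √√(v - 1) * (1 / 8)) atTop atTop :=
    (tendsto_sqrt_atTop.comp (tendsto_sqrt_atTop.comp
      (tendsto_atTop_add_const_right _ (-1) tendsto_id))).atTop_mul_const (by norm_num)
  refine tendsto_atTop_mono' _ ?_ hlower
  filter_upwards [eventually_ge_atTop 6] with v hv
  rw [tanParam, mul_div_assoc]
  exact mul_le_mul (sqrt_le_sqrt (sqrt_sub_one_le_paramRadicand (by linarith)))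
    (one_eighth_le_paramNumer_div_paramDenom hv) (by norm_num) (sqrt_nonneg _)

theorem image_tanParam : tanParam '' Set.Ioi (2 * √3 / 3) = Set.univ :=
  Set.eq_univ_of_univ_subset <| isPreconnected_Ioi.intermediate_value_Iii
    (le_principal_iff.2 self_mem_nhdsWithin) (le_principal_iff.2 (Ioi_mem_atTop _))
    continuousOn_tanParam tendsto_tanParam_nhdsGT tendsto_tanParam_atTop

theorem image_arctan_tanParam :
    (fun v => arctan (tanParam v)) '' Set.Ioi (2 * √3 / 3) = Set.Ioo (-(π / 2)) (π / 2) := by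
  rw [← Set.image_image arctan, image_tanParam, Set.image_univ, range_arctan]

end SubstitutionRange

section CriticalValue

theorem sqrt_kernel_arctan (x : ℝ) :
    √(1 - 2 * (1 + 4 * sin (arctan x) ^ 2) * criticalArg +
      (1 - 4 * sin (arctan x) ^ 2) ^ 2 * criticalArg ^ 2) =
      4 * criticalArg * √(criticalQuartic x) / (1 + x ^ 2) := by
  have hc := criticalArg_mem.1
  have hQ := criticalQuartic_pos x
  have ha₂ : √2 ^ 2 = 2 := sq_sqrt zero_le_two
  rw [sin_sq_arctan, sqrt_eq_iff_mul_self_eq_of_pos (by positivity), ← pow_two, div_pow,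
    mul_pow, sq_sqrt hQ.le, criticalQuartic, criticalArg]
  generalize √2 = a at *
  have ha₃ : a ^ 3 = 2 * a := by rw [pow_succ, ha₂]
  field_simp
  ring_nf
  simp only [ha₂, ha₃]
  ring

theorem setIntegral_kernel_criticalArg :
    ∫ t in Set.Ioo (-(π / 2)) (π / 2), 1 / √(1 - 2 * (1 + 4 * sin t ^ 2) * criticalArg +
      (1 - 4 * sin t ^ 2) ^ 2 * criticalArg ^ 2) =
    √paramConst / (4 * criticalArg) *
      ∫ v in Set.Ioi (2 * √3 / 3), cubicForm cubicWeight v := by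
  rw [← image_arctan_tanParam, MeasureTheory.integral_image_eq_integral_abs_deriv_smul
    (f' := fun v => 1 / (1 + tanParam v ^ 2) * deriv tanParam v) measurableSet_Ioi
    (fun v hv => ((hasDerivAt_tanParam hv).differentiableAt.hasDerivAt.arctan).hasDerivWithinAt)
    (arctan_injective.comp_injOn injOn_tanParam), ← MeasureTheory.integral_const_mul]
  refine MeasureTheory.setIntegral_congr_fun measurableSet_Ioi fun v hv => ?_
  have hc := criticalArg_mem.1
  have hS := sqrt_pos.2 (criticalQuartic_pos (tanParam v))
  simp only [smul_eq_mul]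
  rw [sqrt_kernel_arctan, abs_mul, abs_deriv_tanParam hv, abs_of_pos (by positivity)]
  generalize √(criticalQuartic (tanParam v)) = S at *
  field_simp

theorem one_sub_mul_paramConst_mul_cubicWeight :
    (1 - 9 * criticalArg ^ 2) * paramConst * cubicWeight =
      √6 / 32 * (4 * criticalArg) ^ 2 * (3 * √2) := by
  have ha₂ : √2 ^ 2 = 2 := sq_sqrt zero_le_two
  have hb₂ : √3 ^ 2 = 3 := sq_sqrt zero_le_three
  have h₆ : √6 = √2 * √3 := by
    rw [← sqrt_mul zero_le_two]
    norm_num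
  rw [h₆, criticalArg, paramConst, cubicWeight]
  generalize √2 = a at *
  generalize √3 = b at *
  have ha₃ : a ^ 3 = 2 * a := by rw [pow_succ, ha₂]
  have ha₄ : a ^ 4 = 4 := by linear_combination (a ^ 2 + 2) * ha₂
  ring_nf
  simp only [ha₂, hb₂, ha₃, ha₄]
  ring

theorem sq_powSum_honeycomb_criticalArg :
    (1 - 9 * criticalArg ^ 2) * powSum honeycomb criticalArg ^ 2 =
      √6 / (32 * π ^ 3) *
        (Gamma (1 / 24) * Gamma (5 / 24) * Gamma (7 / 24) * Gamma (11 / 24)) := by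
  obtain ⟨hc, hc₁⟩ := criticalArg_mem
  have h := powSum_honeycomb_eq_setIntegral hc.le hc₁
  rw [setIntegral_kernel_criticalArg] at h
  have hsq := congrArg (· ^ 2) h
  simp only [mul_pow, div_pow, sq_sqrt paramConst_pos.le, sq_setIntegral_cubicForm] at hsq
  have hconst := one_sub_mul_paramConst_mul_cubicWeight
  generalize Gamma (1 / 24) * Gamma (5 / 24) * Gamma (7 / 24) * Gamma (11 / 24) = G at *
  field_simp at hsq hconst ⊢
  refine mul_left_cancel₀ (show 4 ^ 2 * criticalArg ^ 2 * 3 * √2 ≠ 0 by positivity) ?_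
  linear_combination (1 - criticalArg ^ 2 * 9) * 32 * hsq + G * hconst

end CriticalValue

/-- The reduction formula
`F_C^{(3)}(1, 1/2; 1, 1, 1; 1/9, 1/9, 1/9) = (√6/(32π³)) Γ(1/24) Γ(5/24) Γ(7/24) Γ(11/24)`. -/
theorem lauricellaFC_three_reduction :
    (∑' k : Fin 3 → ℕ,
        (ascPochhammer ℝ (∑ j, k j)).eval 1 * (ascPochhammer ℝ (∑ j, k j)).eval (1 / 2) /
          ((∏ j, ((k j).factorial : ℝ) ^ 2) * (9 : ℝ) ^ (∑ j, k j))) =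
      Real.sqrt 6 / (32 * Real.pi ^ 3) *
        (Real.Gamma (1 / 24) * Real.Gamma (5 / 24) * Real.Gamma (7 / 24) *
          Real.Gamma (11 / 24)) := by
  have hcubic : HasSum
      (fun n => (n.centralBinom : ℝ) * (1 / (4 * 9)) ^ n * multinomialSqSum 3 n)
      ((1 - 9 * criticalArg ^ 2) * powSum honeycomb criticalArg ^ 2) := by
    refine hasSum_simpleCubic_one_div.congr_fun fun n => ?_
    rw [multinomialSqSum_three, simpleCubic]
    norm_num [mul_right_comm]
  rw [← sq_powSum_honeycomb_criticalArg,
    ← (hasSum_multinomial_sq (fun n => by positivity) hcubic).tsum_eq]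
  exact tsum_congr (lauricellaFC_summand_eq 9)
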